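/- arXiv:2103.05415 — 2 statements merged into one kernel-verified Lean document; each statement's English description precedes it below -/
import Mathlib

section
/- Let (I_n)_{n∈ℕ} be a symmetric wide-matrix ideal chain over a Noetherian commutative ring K. Then there exist a quasipolynomial f and n_0 ∈ ℕ such that for all n ≥ n_0, the number of Sym([n])-orbits on the (finite) set of minimal prime ideals of A_n over I_n equals f(n). -/
/-- A function `f : ℤ → ℚ` is a quasipolynomial if there are an integer `N ≥ 1` and
polynomials `p i ∈ ℚ[t]` for `i ∈ ℤ/NℤZ` such that `f n = p (n mod N) (n)` for all `n`. -/
def IsQuasiPolynomial (f : ℤ → ℚ) : Prop :=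
  ∃ N : ℕ, 0 < N ∧ ∃ p : ZMod N → Polynomial ℚ,
    ∀ n : ℤ, f n = (p (n : ZMod N)).eval (n : ℚ)

/-- A quantity `a : ℕ → ℕ` is a quasipolynomial in `n` for all `n ≫ 0`. -/
def QuasiPolynomialCount (a : ℕ → ℕ) : Prop :=
  ∃ f : ℤ → ℚ, IsQuasiPolynomial f ∧ ∃ n₀ : ℕ, ∀ n : ℕ, n₀ ≤ n → (a n : ℚ) = f n

open MvPolynomial

namespace SWM

def EQPN (a : ℕ → ℚ) (N : ℕ) : Prop :=
  ∃ n₀ : ℕ, ∀ r : ℕ, ∃ q : Polynomial ℚ, ∀ n, n₀ ≤ n → n % N = r → a n = q.eval (n : ℚ)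

def EQP (a : ℕ → ℚ) : Prop := ∃ N : ℕ, 0 < N ∧ EQPN a N

lemma EQPN.mul {a : ℕ → ℚ} {N : ℕ} (h : EQPN a N) (M : ℕ) : EQPN a (N * M) := by
  obtain ⟨n₀, h⟩ := h
  refine ⟨n₀, fun r => ?_⟩
  obtain ⟨q, hq⟩ := h (r % N)
  refine ⟨q, fun n hn hr => hq n hn ?_⟩
  rw [← hr, Nat.mod_mul_right_mod]

lemma EQP.congr {a b : ℕ → ℚ} (ha : EQP a) (n₁ : ℕ) (h : ∀ n, n₁ ≤ n → a n = b n) : EQP b := by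
  obtain ⟨N, hN, n₀, ha⟩ := ha
  refine ⟨N, hN, max n₀ n₁, fun r => ?_⟩
  obtain ⟨q, hq⟩ := ha r
  exact ⟨q, fun n hn hr => by rw [← h n (by omega), hq n (by omega) hr]⟩

lemma EQP.add {a b : ℕ → ℚ} (ha : EQP a) (hb : EQP b) : EQP (fun n => a n + b n) := by
  obtain ⟨N, hN, ha⟩ := ha
  obtain ⟨M, hM, hb⟩ := hb
  have ha' := ha.mul M
  have hb' := hb.mul N
  rw [mul_comm M N] at hb'
  obtain ⟨n₀, ha⟩ := ha'
  obtain ⟨n₁, hb⟩ := hb'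
  refine ⟨N * M, Nat.mul_pos hN hM, max n₀ n₁, fun r => ?_⟩
  obtain ⟨q, hq⟩ := ha r
  obtain ⟨q', hq'⟩ := hb r
  exact ⟨q + q', fun n hn hr => by
    simp only [hq n (by omega) hr, hq' n (by omega) hr, Polynomial.eval_add]⟩

lemma EQP.neg {a : ℕ → ℚ} (ha : EQP a) : EQP (fun n => - a n) := by
  obtain ⟨N, hN, n₀, ha⟩ := ha
  refine ⟨N, hN, n₀, fun r => ?_⟩
  obtain ⟨q, hq⟩ := ha r
  exact ⟨-q, fun n hn hr => by simp only [hq n hn hr, Polynomial.eval_neg]⟩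

lemma EQP.sub {a b : ℕ → ℚ} (ha : EQP a) (hb : EQP b) : EQP (fun n => a n - b n) := by
  simpa [sub_eq_add_neg] using ha.add hb.neg

lemma EQP.zero : EQP (fun _ => 0) := ⟨1, one_pos, 0, fun _ => ⟨0, by simp⟩⟩

/-- forward shift -/
lemma EQP.shift {a : ℕ → ℚ} (ha : EQP a) (k : ℕ) : EQP (fun n => a (n + k)) := by
  obtain ⟨N, hN, n₀, ha⟩ := ha
  refine ⟨N, hN, n₀, fun r => ?_⟩
  obtain ⟨q, hq⟩ := ha ((r + k) % N)
  refine ⟨q.comp (Polynomial.X + Polynomial.C (k : ℚ)), fun n hn hr => ?_⟩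
  show a (n + k) = _
  rw [hq (n + k) (by omega) (by rw [← hr]; simp)]
  simp

lemma EQP.unshift {a : ℕ → ℚ} (k : ℕ) (ha : EQP (fun n => a (n + k))) : EQP a := by
  obtain ⟨N, hN, n₀, ha⟩ := ha
  refine ⟨N, hN, n₀ + k, fun r => ?_⟩
  obtain ⟨q, hq⟩ := ha ((r + (N - k % N)) % N)
  refine ⟨q.comp (Polynomial.X - Polynomial.C (k : ℚ)), fun n hn hr => ?_⟩
  obtain ⟨m, rfl⟩ : ∃ m, n = m + k := ⟨n - k, by omega⟩
  have := hq m (by omega) (by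
    have hk : k % N < N := Nat.mod_lt _ hN
    rw [← hr, Nat.mod_add_mod]
    have : m + k + (N - k % N) = m + N * (k / N + 1) := by
      have := Nat.div_add_mod k N
      rw [Nat.mul_add]; omega
    rw [this]; simp)
  simp only at this
  rw [this]; simp

lemma exists_antidiff (h : ℚ) (hh : h ≠ 0) (q : Polynomial ℚ) :
    ∃ Q : Polynomial ℚ, ∀ x : ℚ, Q.eval (x + h) - Q.eval x = q.eval x := by
  induction q using Polynomial.induction_on' with
  | add p q hp hq =>
    obtain ⟨P, hP⟩ := hp
    obtain ⟨Q, hQ⟩ := hq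
    refine ⟨P + Q, fun x => ?_⟩
    simp only [Polynomial.eval_add]
    rw [← hP, ← hQ]; ring
  | monomial d a =>
    refine ⟨Polynomial.C (a * h ^ d / (d + 1)) *
      (Polynomial.bernoulli (d + 1)).comp (Polynomial.C h⁻¹ * Polynomial.X), fun x => ?_⟩
    simp only [Polynomial.eval_mul, Polynomial.eval_C, Polynomial.eval_comp, Polynomial.eval_X,
      Polynomial.eval_monomial]
    have e : h⁻¹ * (x + h) = 1 + h⁻¹ * x := by field_simp; ring
    rw [e, Polynomial.bernoulli_eval_one_add]
    have : (d + 1 : ℚ) ≠ 0 := by positivity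
    simp only [Nat.add_sub_cancel, mul_pow, inv_pow]
    push_cast
    field_simp
    ring

lemma EQP.of_diff {a b : ℕ → ℚ} (w : ℕ) (hw : 0 < w) (hb : EQP b) (n₁ : ℕ)
    (h : ∀ n, n₁ ≤ n → a (n + w) - a n = b n) : EQP a := by
  obtain ⟨N, hN, n₀, hb⟩ := hb
  choose p hp using hb
  have hNw : 0 < N * w := Nat.mul_pos hN hw
  set n₂ := max n₀ n₁
  refine ⟨N * w, hNw, n₂, fun r => ?_⟩
  have tel : ∀ (k n : ℕ), n₂ ≤ n → a (n + k * w) - a n =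
      ∑ i ∈ Finset.range k, b (n + i * w) := by
    intro k n hn
    induction k with
    | zero => simp
    | succ k ih =>
      rw [Finset.sum_range_succ, ← ih, ← h (n + k * w) (by omega)]
      rw [show n + (k + 1) * w = n + k * w + w by ring]; ring
  let q : Polynomial ℚ := ∑ i ∈ Finset.range N,
    (p ((r + i * w) % N)).comp (Polynomial.X + Polynomial.C ((i * w : ℕ) : ℚ))
  have hq : ∀ n, n₂ ≤ n → n % (N * w) = r → a (n + N * w) - a n = q.eval (n : ℚ) := by
    intro n hn hr
    rw [tel N n hn]
    simp only [q, Polynomial.eval_finsetSum, Polynomial.eval_comp, Polynomial.eval_add,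
      Polynomial.eval_X, Polynomial.eval_C]
    refine Finset.sum_congr rfl fun i _ => ?_
    rw [hp ((r + i * w) % N) (n + i * w) (by omega)]
    · push_cast; rfl
    · rw [← hr]
      rw [Nat.add_mod, ← Nat.mod_mul_right_mod n N w, ← Nat.add_mod]
  obtain ⟨Q, hQ⟩ := exists_antidiff ((N * w : ℕ) : ℚ) (by positivity) q
  by_cases hr : r < N * w
  swap
  · exact ⟨0, fun n _ hn => absurd (Nat.mod_lt n hNw) (by omega)⟩
  -- the first n ≥ n₂ with residue r
  obtain ⟨s, hs, hsr⟩ : ∃ s, n₂ ≤ s ∧ s % (N * w) = r :=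
    ⟨r + (N * w) * n₂, by nlinarith, by simp [Nat.mod_eq_of_lt hr]⟩
  let d := a s - Q.eval (s : ℚ)
  have step : ∀ n, n₂ ≤ n → n % (N * w) = r →
      a (n + N * w) - Q.eval ((n + N * w : ℕ) : ℚ) = a n - Q.eval (n : ℚ) := by
    intro n hn hnr
    have h1 := hq n hn hnr
    have h2 := hQ n
    push_cast at h2 ⊢
    linarith
  have stepk : ∀ k n, n₂ ≤ n → n % (N * w) = r →
      a (n + k * (N * w)) - Q.eval ((n + k * (N * w) : ℕ) : ℚ) = a n - Q.eval (n : ℚ) := by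
    intro k n hn hnr
    induction k with
    | zero => simp
    | succ k ih =>
      rw [← ih, show n + (k + 1) * (N * w) = n + k * (N * w) + N * w by ring,
        step _ (by omega) (by simpa using hnr)]
  refine ⟨Q + Polynomial.C d, fun n hn hnr => ?_⟩
  have : a n - Q.eval (n : ℚ) = d := by
    rcases le_total n s with hle | hle
    · obtain ⟨k, hk⟩ := (Nat.modEq_iff_dvd' hle).1 (show n ≡ s [MOD N * w] from hnr.trans hsr.symm)
      have := stepk k n hn hnr
      rw [show n + k * (N * w) = s by rw [mul_comm k, ← hk]; omega] at this
      exact this.symm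
    · obtain ⟨k, hk⟩ := (Nat.modEq_iff_dvd' hle).1 (show s ≡ n [MOD N * w] from hsr.trans hnr.symm)
      have := stepk k s hs hsr
      rw [show s + k * (N * w) = n by rw [mul_comm k, ← hk]; omega] at this
      exact this
  simp only [Polynomial.eval_add, Polynomial.eval_C]
  linarith

/-- Conversion to integer-indexed form. -/
lemma EQP.exists_zmod {a : ℕ → ℚ} (ha : EQP a) : ∃ f : ℤ → ℚ, (∃ N : ℕ, 0 < N ∧
    ∃ p : ZMod N → Polynomial ℚ, ∀ n : ℤ, f n = (p (n : ZMod N)).eval (n : ℚ)) ∧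
    ∃ n₀ : ℕ, ∀ n : ℕ, n₀ ≤ n → a n = f n := by
  obtain ⟨N, hN, n₀, ha⟩ := ha
  choose p hp using ha
  refine ⟨fun n => (p ((n : ZMod N).val)).eval (n : ℚ), ⟨N, hN, fun z => p z.val, fun n => rfl⟩, n₀,
    fun n hn => ?_⟩
  rw [hp (n % N) n hn rfl]
  simp [ZMod.val_natCast]

end SWM

namespace SWM

noncomputable def cnt {α : Type*} (w : α → ℕ) (S : Set α) (n : ℕ) : ℚ :=
  (({x | x ∈ S ∧ w x = n}).ncard : ℚ)

lemma cnt_union {α : Type*} {w : α → ℕ} (hf : ∀ n, {x | w x = n}.Finite) (S T : Set α) (n : ℕ) :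
    cnt w (S ∪ T) n = cnt w S n + cnt w T n - cnt w (S ∩ T) n := by
  have h := Set.ncard_union_add_ncard_inter {x | x ∈ S ∧ w x = n} {x | x ∈ T ∧ w x = n}
    ((hf n).subset fun x hx => hx.2) ((hf n).subset fun x hx => hx.2)
  have e1 : {x | x ∈ S ∧ w x = n} ∪ {x | x ∈ T ∧ w x = n} = {x | x ∈ S ∪ T ∧ w x = n} := by
    ext x; simp only [Set.mem_union, Set.mem_inter_iff, Set.mem_ofPred_eq]; tauto
  have e2 : {x | x ∈ S ∧ w x = n} ∩ {x | x ∈ T ∧ w x = n} = {x | x ∈ S ∩ T ∧ w x = n} := by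
    ext x; simp only [Set.mem_union, Set.mem_inter_iff, Set.mem_ofPred_eq]; tauto
  rw [e1, e2] at h
  unfold cnt
  rw [eq_sub_iff_add_eq]
  exact_mod_cast h

lemma cnt_empty {α : Type*} {w : α → ℕ} (n : ℕ) : cnt w ∅ n = 0 := by simp [cnt]

lemma cnt_image {α β : Type*} {w : α → ℕ} {w' : β → ℕ} (k : ℕ) (f : α → β) (S : Set α)
    (hinj : Set.InjOn f S) (hw : ∀ x ∈ S, w' (f x) = w x + k) (n : ℕ) :
    cnt w' (f '' S) (n + k) = cnt w S n := by
  unfold cnt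
  have e : {x | x ∈ f '' S ∧ w' x = n + k} = f '' {x | x ∈ S ∧ w x = n} := by
    ext y; constructor
    · rintro ⟨⟨x, hx, rfl⟩, h⟩
      rw [hw x hx] at h
      exact ⟨x, ⟨hx, by omega⟩, rfl⟩
    · rintro ⟨x, ⟨hx, h⟩, rfl⟩
      exact ⟨⟨x, hx, rfl⟩, by rw [hw x hx, h]⟩
  rw [e, Set.InjOn.ncard_image (hinj.mono fun x hx => hx.1)]

lemma upper_acc {α : Type*} [Preorder α] [WellQuasiOrderedLE α] :
    WellFounded (fun U V : {U : Set α // IsUpperSet U} => V.1 ⊂ U.1) := by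
  have : IsStrictOrder {U : Set α // IsUpperSet U} (fun U V => V.1 ⊂ U.1) :=
    { irrefl := fun U h => h.ne rfl
      trans := fun U V W h1 h2 => h2.trans h1 }
  rw [RelEmbedding.wellFounded_iff_isEmpty]
  refine ⟨fun f => ?_⟩
  have hlt : ∀ i j, i < j → (f i).1 ⊂ (f j).1 := fun i j h => f.map_rel_iff.2 h
  have hx : ∀ i, ∃ x, x ∈ (f (i + 1)).1 ∧ x ∉ (f i).1 := fun i =>
    Set.exists_of_ssubset (hlt i (i + 1) (Nat.lt_succ_self i))
  choose x hx1 hx2 using hx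
  obtain ⟨i, j, hij, hle⟩ := (wellQuasiOrdered_le (α := α)) x
  have hsub : (f (i + 1)).1 ⊆ (f j).1 := by
    rcases eq_or_lt_of_le (Nat.succ_le_of_lt hij) with h | h
    · rw [← h]
    · exact (hlt _ _ h).subset
  exact hx2 j ((f j).2 hle (hsub (hx1 i)))

lemma upper_induction {α : Type*} [Preorder α] [WellQuasiOrderedLE α] (P : Set α → Prop)
    (h : ∀ U, IsUpperSet U → (∀ V, IsUpperSet V → U ⊂ V → P V) → P U) (U : Set α)
    (hU : IsUpperSet U) : P U := by
  have := upper_acc.induction (C := fun V : {U : Set α // IsUpperSet U} => P V.1) ⟨U, hU⟩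
    (fun V ih => h V.1 V.2 fun W hW hlt => ih ⟨W, hW⟩ hlt)
  exact this

def wsum {m : ℕ} (w : Fin m → ℕ) (z : Fin m → ℕ) : ℕ := ∑ i, w i * z i

lemma wsum_fin {m : ℕ} (w : Fin m → ℕ) (hw : ∀ i, 0 < w i) (n : ℕ) :
    {z | wsum w z = n}.Finite := by
  refine (Set.Finite.subset (Set.finite_Iic (fun _ : Fin m => n))) fun z hz i => ?_
  have h1 : w i * z i ≤ wsum w z :=
    Finset.single_le_sum (f := fun i => w i * z i) (fun _ _ => Nat.zero_le _) (Finset.mem_univ i)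
  have h2 := hw i
  rw [Set.mem_ofPred_eq] at hz
  show z i ≤ n
  nlinarith

lemma count_upper (m : ℕ) : ∀ (w : Fin m → ℕ) (_ : ∀ i, 0 < w i) (U : Set (Fin m → ℕ))
    (_ : IsUpperSet U), EQP (cnt (wsum w) U) := by
  induction m with
  | zero =>
    intro w hw U hU
    refine EQP.zero.congr 1 fun n hn => ?_
    have : {x | x ∈ U ∧ wsum w x = n} = ∅ := by
      ext x; simp [wsum]; omega
    simp [cnt, this]
  | succ m ih =>
    intro w hw U hU
    refine upper_induction (fun U => EQP (cnt (wsum w) U)) ?_ U hU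
    clear hU U
    intro U hU ihU
    let w' : Fin m → ℕ := fun i => w i.succ
    let V : Set (Fin m → ℕ) := {z | (Fin.cons 0 z : Fin (m + 1) → ℕ) ∈ U}
    have hV : IsUpperSet V := fun a b hab ha => hU (by
      intro i; refine Fin.cases ?_ (fun i => ?_) i
      · simp
      · simpa using hab i) ha
    let e : Fin (m + 1) → ℕ := Pi.single 0 1
    let U' : Set (Fin (m + 1) → ℕ) := {z | z + e ∈ U}
    have hU' : IsUpperSet U' := fun a b hab ha => hU (by gcongr) ha
    have hUU' : U ⊆ U' := fun z hz => hU (by simp) hz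
    have hwe : wsum w e = w 0 := by simp [wsum, e, Pi.single_apply]
    have key : ∀ n, cnt (wsum w) U (n + w 0) = cnt (wsum w') V (n + w 0) + cnt (wsum w) U' n := by
      intro n
      have eU : U = ((fun z : Fin m → ℕ => (Fin.cons 0 z : Fin (m + 1) → ℕ)) '' V) ∪ ((fun z => z + e) '' U') := by
        ext z; constructor
        · intro hz
          by_cases h0 : z 0 = 0
          · left
            have hz' : (Fin.cons 0 (Fin.tail z) : Fin (m + 1) → ℕ) = z := by
              rw [← h0, Fin.cons_self_tail]
            exact ⟨Fin.tail z, by simpa [V, hz'] using hz, hz'⟩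
          · right
            have hz' : z - e + e = z := by
              ext i; refine Fin.cases ?_ (fun i => ?_) i
              · simp [e]; omega
              · simp [e]
            exact ⟨z - e, by simpa [U', hz'] using hz, hz'⟩
        · rintro (⟨z, hz, rfl⟩ | ⟨z, hz, rfl⟩)
          · exact hz
          · exact hz
      have hdisj : ((fun z : Fin m → ℕ => (Fin.cons 0 z : Fin (m + 1) → ℕ)) '' V) ∩ ((fun z => z + e) '' U') = ∅ := by
        ext z
        simp only [Set.mem_inter_iff, Set.mem_image, Set.mem_empty_iff_false, iff_false, not_and]
        rintro ⟨a, _, rfl⟩ ⟨b, _, hb⟩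
        have := congrFun hb 0
        simp [e] at this
      conv_lhs => rw [eU]
      rw [cnt_union (wsum_fin w hw), hdisj, cnt_empty, sub_zero]
      congr 1
      · refine cnt_image (w := wsum w') (w' := wsum w) 0
          (fun z : Fin m → ℕ => (Fin.cons 0 z : Fin (m + 1) → ℕ)) V ?_ ?_ (n + w 0)
        · intro a _ b _ hab
          exact (Fin.cons_injective2 hab).2
        · intro x _
          simp [wsum, w', Fin.sum_univ_succ]
      · refine cnt_image (w := wsum w) (w 0) (fun z => z + e) U' ?_ ?_ n
        · intro a _ b _ hab
          simpa using hab
        · intro x _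
          rw [← hwe]
          simp [wsum, mul_add, Finset.sum_add_distrib]
    have hslice := (ih w' (fun i => hw _) V hV).shift (w 0)
    by_cases hc : U' = U
    · refine EQP.of_diff (w 0) (hw 0) hslice 0 fun n _ => ?_
      rw [key, hc]; ring
    · have h2 := ihU U' hU' (lt_of_le_of_ne hUU' (Ne.symm hc))
      refine EQP.unshift (w 0) ((hslice.add h2).congr 0 fun n _ => ?_)
      rw [key]

lemma count_lower {m : ℕ} (w : Fin m → ℕ) (hw : ∀ i, 0 < w i) (U : Set (Fin m → ℕ))
    (hU : IsUpperSet U) : EQP (cnt (wsum w) Uᶜ) := by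
  have h1 := (count_upper m w hw Set.univ isUpperSet_univ).sub (count_upper m w hw U hU)
  refine h1.congr 0 fun n _ => ?_
  have := cnt_union (wsum_fin w hw) U Uᶜ n
  simp only [Set.union_compl_self, Set.inter_compl_self, cnt_empty] at this
  linarith

end SWM

namespace SWM
open Pointwise

variable {ι : Type} [Fintype ι]

def tot (x : ι → ℕ) : ℕ := ∑ i, x i

lemma tot_add (x y : ι → ℕ) : tot (x + y) = tot x + tot y := by
  simp [tot, Finset.sum_add_distrib]

lemma tot_eq_zero {x : ι → ℕ} (h : tot x = 0) : x = 0 := by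
  ext i; simpa using (Finset.sum_eq_zero_iff.1 h) i (Finset.mem_univ i)

lemma tot_fin (n : ℕ) : {x : ι → ℕ | tot x = n}.Finite := by
  classical
  refine (Set.Finite.subset (Set.finite_Iic (fun _ : ι => n))) fun z hz i => ?_
  have h1 : z i ≤ tot z :=
    Finset.single_le_sum (f := fun i => z i) (fun _ _ => Nat.zero_le _) (Finset.mem_univ i)
  rw [Set.mem_ofPred_eq] at hz
  exact h1.trans hz.le

def hyb (B : Set (ι → ℕ)) (P : AddSubmonoid (ι → ℕ)) : Set (ι → ℕ) :=
  {x | ∃ b ∈ B, ∃ p ∈ P, x = b + p}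

lemma fg_param (P : AddSubmonoid (ι → ℕ)) (hP : P.FG) :
    ∃ (m : ℕ) (φ : (Fin m → ℕ) →+ (ι → ℕ)) (w : Fin m → ℕ), (∀ i, 0 < w i) ∧
      (∀ z, tot (φ z) = wsum w z) ∧ ∀ x, x ∈ P ↔ ∃ z, φ z = x := by
  classical
  obtain ⟨S, hS⟩ := hP
  let T : Finset (ι → ℕ) := S.erase 0
  have hT : AddSubmonoid.closure (T : Set (ι → ℕ)) = P := by
    rw [← hS, ← AddSubmonoid.closure_sdiff_singleton_zero (S : Set (ι → ℕ))]
    simp [T]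
  let e := T.equivFin
  let v : Fin T.card → (ι → ℕ) := fun i => (e.symm i).1
  have hv : Set.range v = (T : Set (ι → ℕ)) := by
    ext x; constructor
    · rintro ⟨i, rfl⟩; exact (e.symm i).2
    · intro hx; exact ⟨e ⟨x, hx⟩, by simp [v]⟩
  let φ : (Fin T.card → ℕ) →+ (ι → ℕ) :=
    { toFun := fun z => ∑ i, z i • v i
      map_zero' := by simp
      map_add' := fun a b => by simp [add_smul, Finset.sum_add_distrib] }
  refine ⟨T.card, φ, fun i => tot (v i), fun i => ?_, fun z => ?_, fun x => ?_⟩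
  · by_contra h
    have : v i = 0 := tot_eq_zero (Nat.eq_zero_of_not_pos h)
    have h2 : v i ∈ T := (e.symm i).2
    rw [this] at h2
    simp [T] at h2
  · simp only [φ, AddMonoidHom.coe_mk, ZeroHom.coe_mk, tot, wsum, Finset.sum_apply, Pi.smul_apply,
      smul_eq_mul, Finset.sum_mul]
    rw [Finset.sum_comm]
    refine Finset.sum_congr rfl fun i _ => Finset.sum_congr rfl fun j _ => mul_comm _ _
  · rw [← hT, ← hv]
    constructor
    · intro hx
      induction hx using AddSubmonoid.closure_induction with
      | mem x hx =>
        obtain ⟨i, rfl⟩ := hx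
        exact ⟨Pi.single i 1, by simp [φ, Pi.single_apply]⟩
      | zero => exact ⟨0, map_zero φ⟩
      | add x y _ _ hx hy =>
        obtain ⟨a, rfl⟩ := hx
        obtain ⟨b, rfl⟩ := hy
        exact ⟨a + b, map_add φ a b⟩
    · rintro ⟨z, rfl⟩
      show (∑ i, z i • v i) ∈ AddSubmonoid.closure (Set.range v)
      refine sum_mem fun i _ => ?_
      exact nsmul_mem (AddSubmonoid.subset_closure (Set.mem_range_self i)) _

lemma count_hyb (B : Set (ι → ℕ)) (hB : B.Finite) (P : AddSubmonoid (ι → ℕ)) (hP : P.FG) :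
    EQP (cnt tot (hyb B P)) := by
  obtain ⟨m, φ, w, hw, hφw, hφ⟩ := fg_param P hP
  induction B, hB using Set.Finite.induction_on with
  | empty =>
    refine EQP.zero.congr 0 fun n _ => ?_
    have : hyb (∅ : Set (ι → ℕ)) P = ∅ := by ext x; simp [hyb]
    rw [this, cnt_empty]
  | @insert b B hb hfin ih =>
    let G : Set (Fin m → ℕ) :=
      {z | (∃ z', toLex z' < toLex z ∧ φ z' = φ z) ∨ b + φ z ∈ hyb B P}
    have hG : IsUpperSet G := by
      intro z y hzy hz
      obtain ⟨d, rfl⟩ := exists_add_of_le hzy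
      rcases hz with ⟨z', h1, h2⟩ | ⟨b', hb', p, hp, h⟩
      · left
        refine ⟨z' + d, ?_, by rw [map_add, map_add, h2]⟩
        rw [toLex_add, toLex_add]
        exact add_lt_add_left h1 (toLex d)
      · right
        refine ⟨b', hb', p + φ d, P.add_mem hp ((hφ _).2 ⟨d, rfl⟩), ?_⟩
        rw [map_add, ← add_assoc, h, add_assoc]
    have e1 : hyb (insert b B) P = hyb B P ∪ ((fun z => b + φ z) '' Gᶜ) := by
      ext x; constructor
      · rintro ⟨b', hb' | hb', p, hp, rfl⟩
        · subst hb'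
          by_cases hx : b' + p ∈ hyb B P
          · exact Or.inl hx
          · right
            have hne : {z : Lex (Fin m → ℕ) | φ (ofLex z) = p}.Nonempty := by
              obtain ⟨z, hz⟩ := (hφ p).1 hp
              exact ⟨toLex z, hz⟩
            obtain ⟨z, hz, hmin⟩ := WellFounded.has_min (wellFounded_lt (α := Lex (Fin m → ℕ))) _ hne
            have hz : φ (ofLex z) = p := hz
            refine ⟨ofLex z, ?_, by simp only [hz]⟩
            rintro (⟨z', h1, h2⟩ | h)
            · exact hmin (toLex z') (h2.trans hz) h1
            · rw [hz] at h; exact hx h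
        · exact Or.inl ⟨b', hb', p, hp, rfl⟩
      · rintro (⟨b', hb', p, hp, rfl⟩ | ⟨z, _, rfl⟩)
        · exact ⟨b', Or.inr hb', p, hp, rfl⟩
        · exact ⟨b, Or.inl rfl, φ z, (hφ _).2 ⟨z, rfl⟩, rfl⟩
    have e2 : hyb B P ∩ ((fun z => b + φ z) '' Gᶜ) = ∅ := by
      ext x
      simp only [Set.mem_inter_iff, Set.mem_image, Set.mem_empty_iff_false, iff_false, not_and]
      rintro hx ⟨z, hz, rfl⟩
      exact hz (Or.inr hx)
    have h3 : EQP (cnt tot ((fun z => b + φ z) '' Gᶜ)) := by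
      refine EQP.unshift (tot b) ((count_lower w hw G hG).congr 0 fun n _ => ?_)
      rw [cnt_image (w := wsum w) (w' := tot) (tot b)]
      · intro z hz z' hz' h
        have h : φ z = φ z' := add_left_cancel h
        rcases lt_trichotomy (toLex z) (toLex z') with hl | hl | hl
        · exact absurd (Or.inl ⟨z, hl, h⟩) hz'
        · exact toLex.injective hl
        · exact absurd (Or.inl ⟨z', hl, h.symm⟩) hz
      · intro x _
        rw [tot_add, hφw, add_comm]
    refine (ih.add h3).congr 0 fun n _ => ?_
    rw [e1, cnt_union tot_fin, e2, cnt_empty, sub_zero]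

def IsHyb (S : Set (ι → ℕ)) : Prop := ∃ B : Set (ι → ℕ), B.Finite ∧
  ∃ P : AddSubmonoid (ι → ℕ), P.FG ∧ S = hyb B P

lemma IsHyb.inter {S T : Set (ι → ℕ)} (hS : IsHyb S) (hT : IsHyb T) : IsHyb (S ∩ T) := by
  obtain ⟨B, hB, P, hP, rfl⟩ := hS
  obtain ⟨C, hC, Q, hQ, rfl⟩ := hT
  obtain ⟨m, φ, w, hw, hφw, hφ⟩ := fg_param P hP
  obtain ⟨m', ψ, w', hw', hψw, hψ⟩ := fg_param Q hQ
  have hPQ : (P ⊓ Q).FG := by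
    have h := AddSubmonoid.fg_eqLocusM (φ.comp (AddMonoidHom.fst (Fin m → ℕ) (Fin m' → ℕ)))
      (ψ.comp (AddMonoidHom.snd (Fin m → ℕ) (Fin m' → ℕ)))
    have h2 := h.map (φ.comp (AddMonoidHom.fst (Fin m → ℕ) (Fin m' → ℕ)))
    convert h2 using 1
    ext x
    constructor
    · rintro ⟨h1, h2⟩
      obtain ⟨z, rfl⟩ := (hφ x).1 h1
      obtain ⟨z', hz'⟩ := (hψ _).1 h2
      exact ⟨(z, z'), hz'.symm, rfl⟩
    · rintro ⟨⟨z, z'⟩, h1, rfl⟩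
      refine ⟨(hφ _).2 ⟨z, rfl⟩, (hψ _).2 ⟨z', ?_⟩⟩
      exact h1.symm
  -- minimal solutions
  let Sol : (ι → ℕ) → (ι → ℕ) → Set ((Fin m → ℕ) × (Fin m' → ℕ)) := fun b c =>
    {z | b + φ z.1 = c + ψ z.2}
  let D : Set (ι → ℕ) := ⋃ b ∈ B, ⋃ c ∈ C, (fun z : (Fin m → ℕ) × (Fin m' → ℕ) => b + φ z.1) ''
    {z | Minimal (· ∈ Sol b c) z}
  have hD : D.Finite := by
    refine hB.biUnion fun b _ => hC.biUnion fun c _ => Set.Finite.image _ ?_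
    exact WellQuasiOrderedLE.finite_of_isAntichain (setOfPred_minimal_antichain _)
  refine ⟨D, hD, P ⊓ Q, hPQ, ?_⟩
  ext x; constructor
  · rintro ⟨⟨b, hb, p, hp, rfl⟩, c, hc, q, hq, h⟩
    obtain ⟨z, rfl⟩ := (hφ p).1 hp
    obtain ⟨z', rfl⟩ := (hψ q).1 hq
    have hmem : (z, z') ∈ Sol b c := h
    obtain ⟨⟨y, y'⟩, hle, hmin⟩ := exists_minimal_le_of_wellFoundedLT (· ∈ Sol b c) (z, z') hmem
    obtain ⟨⟨d, d'⟩, hd⟩ := exists_add_of_le hle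
    simp only [Prod.mk_add_mk, Prod.mk.injEq] at hd
    obtain ⟨rfl, rfl⟩ := hd
    have hy : b + φ y = c + ψ y' := hmin.1
    have hdd : φ d = ψ d' := by
      rw [map_add, map_add, ← add_assoc, ← add_assoc, hy] at h
      exact add_left_cancel h
    refine ⟨b + φ y, ?_, φ d, ⟨(hφ _).2 ⟨d, rfl⟩, (hψ _).2 ⟨d', hdd.symm⟩⟩, ?_⟩
    · simp only [D, Set.mem_iUnion]
      exact ⟨b, hb, c, hc, (y, y'), hmin, rfl⟩
    · rw [map_add, add_assoc]
  · rintro ⟨d, hd, p, ⟨hp, hp'⟩, rfl⟩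
    simp only [D, Set.mem_iUnion] at hd
    obtain ⟨b, hb, c, hc, ⟨y, y'⟩, hmin, rfl⟩ := hd
    have hy : b + φ y = c + ψ y' := hmin.1
    refine ⟨⟨b, hb, φ y + p, P.add_mem ((hφ _).2 ⟨y, rfl⟩) hp, by rw [add_assoc]⟩,
      ⟨c, hc, ψ y' + p, Q.add_mem ((hψ _).2 ⟨y', rfl⟩) hp', ?_⟩⟩
    simp only
    rw [hy, add_assoc]

lemma count_hyb_union (k : ℕ) : ∀ (H : Fin k → Set (ι → ℕ)) (_ : ∀ i, IsHyb (H i)),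
    EQP (cnt tot (⋃ i, H i)) := by
  induction k with
  | zero =>
    intro H _
    refine EQP.zero.congr 0 fun n _ => ?_
    simp [cnt_empty]
  | succ k ih =>
    intro H hH
    have e : (⋃ i, H i) = H 0 ∪ ⋃ i : Fin k, H i.succ := by
      ext x; simp [Fin.exists_fin_succ]
    have h0 : EQP (cnt tot (H 0)) := by
      obtain ⟨B, hB, P, hP, h⟩ := hH 0
      rw [h]; exact count_hyb B hB P hP
    have h1 := ih (fun i => H i.succ) (fun i => hH _)
    have h2 := ih (fun i => H 0 ∩ H i.succ) (fun i => (hH 0).inter (hH _))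
    refine ((h0.add h1).sub h2).congr 0 fun n _ => ?_
    rw [e, cnt_union tot_fin, Set.inter_iUnion]

theorem count_semilinear (S : Set (ι → ℕ)) (hS : IsSemilinearSet S) : EQP (cnt tot S) := by
  obtain ⟨T, hT, hlin, rfl⟩ := hS
  obtain ⟨k, f, hf⟩ := hT.fin_param
  have : ⋃₀ T = ⋃ i, f i := by
    rw [Set.sUnion_eq_biUnion]
    ext x; simp [← hf.2]
  rw [this]
  refine count_hyb_union k f fun i => ?_
  obtain ⟨a, P, hP, h⟩ := isLinearSet_iff_exists_fg_eq_vadd.1 (hlin (f i) (by rw [← hf.2]; exact ⟨i, rfl⟩))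
  refine ⟨{a}, Set.finite_singleton _, P, hP, ?_⟩
  rw [h]; ext x
  simp only [hyb, Set.mem_singleton_iff, exists_eq_left, Set.mem_ofPred_eq, Set.mem_vadd_set,
    vadd_eq_add, SetLike.mem_coe]
  exact ⟨fun ⟨p, hp, h⟩ => ⟨p, hp, h.symm⟩, fun ⟨p, hp, h⟩ => ⟨p, hp, h.symm⟩⟩

end SWM

namespace SWM
open Pointwise

section counts
variable {κ : Type} [Fintype κ] [DecidableEq κ]

def cntv {n : ℕ} (τ : Fin n → κ) : κ → ℕ := fun l => Fintype.card {j // τ j = l}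

lemma tot_cntv {n : ℕ} (τ : Fin n → κ) : tot (cntv τ) = n := by
  have : Fintype.card (Σ l, {j // τ j = l}) = n := by
    rw [Fintype.card_congr (Equiv.sigmaFiberEquiv τ), Fintype.card_fin]
  rw [Fintype.card_sigma] at this
  exact this

lemma exists_cntv (z : κ → ℕ) : ∃ τ : Fin (tot z) → κ, cntv τ = z := by
  have hc : Fintype.card (Σ l, Fin (z l)) = tot z := by simp [tot]
  let e : (Σ l, Fin (z l)) ≃ Fin (tot z) := Fintype.equivFinOfCardEq hc
  refine ⟨fun j => (e.symm j).1, ?_⟩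
  ext l
  unfold cntv
  have : {j // (e.symm j).1 = l} ≃ Fin (z l) :=
    (e.symm.subtypeEquiv (q := fun s => s.1 = l) (fun a => Iff.rfl)).trans
      (Equiv.sigmaSubtype l)
  rw [Fintype.card_congr this, Fintype.card_fin]

lemma exists_cntv' {n : ℕ} (z : κ → ℕ) (h : tot z = n) : ∃ τ : Fin n → κ, cntv τ = z := by
  subst h; exact exists_cntv z

lemma exists_emb {m n : ℕ} (τ : Fin m → κ) (σ : Fin n → κ) (h : cntv τ ≤ cntv σ) :
    ∃ ι : Fin m → Fin n, Function.Injective ι ∧ σ ∘ ι = τ := by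
  have : ∀ l, Nonempty ({j // τ j = l} ↪ {j // σ j = l}) := fun l =>
    Function.Embedding.nonempty_of_card_le (h l)
  let f := fun l => (this l).some
  have hf : ∀ j, σ (f (τ j) ⟨j, rfl⟩).1 = τ j := fun j => (f (τ j) ⟨j, rfl⟩).2
  refine ⟨fun j => (f (τ j) ⟨j, rfl⟩).1, fun a b hab => ?_, funext hf⟩
  have hab : (f (τ a) ⟨a, rfl⟩).1 = (f (τ b) ⟨b, rfl⟩).1 := hab
  have h1 : τ a = τ b := by rw [← hf a, ← hf b, hab]
  have key : ∀ l l' (ha : τ a = l) (hb : τ b = l'), l = l' →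
      (f l ⟨a, ha⟩).1 = (f l' ⟨b, hb⟩).1 → a = b := by
    rintro l l' ha hb rfl h
    have := (f l).injective (Subtype.ext h)
    simpa using this
  exact key _ _ rfl rfl h1 hab

lemma exists_perm {n : ℕ} (τ σ : Fin n → κ) (h : cntv τ = cntv σ) :
    ∃ π : Equiv.Perm (Fin n), σ ∘ π = τ := by
  obtain ⟨ι, hi, hc⟩ := exists_emb τ σ h.le
  exact ⟨Equiv.ofBijective ι (Finite.injective_iff_bijective.1 hi), hc⟩

lemma cntv_perm {n : ℕ} (τ : Fin n → κ) (π : Equiv.Perm (Fin n)) : cntv (τ ∘ π) = cntv τ := by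
  ext l
  exact Fintype.card_congr (π.subtypeEquiv fun a => Iff.rfl)

end counts

section semil
variable {κ : Type} [Fintype κ]

lemma semilinear_upper (U : Set (κ → ℕ)) (hU : IsUpperSet U) : IsSemilinearSet U := by
  have hfin : {z | Minimal (· ∈ U) z}.Finite :=
    WellQuasiOrderedLE.finite_of_isAntichain (setOfPred_minimal_antichain _)
  have : U = ⋃ a ∈ {z | Minimal (· ∈ U) z}, (a +ᵥ (Set.univ : Set (κ → ℕ))) := by
    ext x
    simp only [Set.mem_iUnion]
    constructor
    · intro hx
      obtain ⟨y, hle, hmin⟩ := exists_minimal_le_of_wellFoundedLT (· ∈ U) x hx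
      obtain ⟨d, rfl⟩ := exists_add_of_le hle
      exact ⟨y, hmin, Set.mem_vadd_set.2 ⟨d, trivial, rfl⟩⟩
    · rintro ⟨y, hmin, h⟩
      obtain ⟨d, _, rfl⟩ := Set.mem_vadd_set.1 h
      exact hU (by simp) hmin.1
  rw [this]
  exact IsSemilinearSet.biUnion hfin fun a _ => IsSemilinearSet.univ.vadd a

lemma semilinear_lower (U : Set (κ → ℕ)) (hU : IsLowerSet U) : IsSemilinearSet U := by
  have := (semilinear_upper Uᶜ hU.compl).compl
  rwa [compl_compl] at this

instance : AddMonoid.FG ((κ → ℕ) × (κ → ℕ)) := inferInstance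

lemma semilinear_lt : IsSemilinearSet {x : ℕ × ℕ | x.1 < x.2} := by
  have : {x : ℕ × ℕ | x.1 < x.2} = (AddMonoidHom.prod (AddMonoidHom.fst ℕ ℕ)
      (AddMonoidHom.fst ℕ ℕ + AddMonoidHom.snd ℕ ℕ)) '' ((0, 1) +ᵥ (Set.univ : Set (ℕ × ℕ))) := by
    ext ⟨a, b⟩
    simp only [Set.mem_ofPred_eq, Set.mem_image, Set.mem_vadd_set]
    constructor
    · intro h
      exact ⟨_, ⟨(a, b - a - 1), trivial, rfl⟩, by simp; omega⟩
    · rintro ⟨_, ⟨⟨c, d⟩, _, rfl⟩, h⟩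
      simp at h; omega
  rw [this]
  exact (IsSemilinearSet.univ.vadd _).image _

lemma semilinear_lex (k : ℕ) :
    IsSemilinearSet {x : (Fin k → ℕ) × (Fin k → ℕ) | toLex x.1 < toLex x.2} := by
  let ev : Fin k → ((Fin k → ℕ) × (Fin k → ℕ)) →+ ℕ × ℕ := fun i =>
    AddMonoidHom.prodMap (Pi.evalAddMonoidHom _ i) (Pi.evalAddMonoidHom _ i)
  have e : {x : (Fin k → ℕ) × (Fin k → ℕ) | toLex x.1 < toLex x.2} =
      ⋃ i, ((⋂ j : {j : Fin k // j < i}, {x | 0 + ((AddMonoidHom.fst ℕ ℕ).comp (ev j)) x =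
        0 + ((AddMonoidHom.snd ℕ ℕ).comp (ev j)) x}) ∩ (ev i) ⁻¹' {x : ℕ × ℕ | x.1 < x.2}) := by
    ext x
    simp only [Set.mem_ofPred_eq, Set.mem_iUnion, Set.mem_inter_iff, Set.mem_iInter,
      Set.mem_preimage]
    simp only [zero_add, AddMonoidHom.coe_comp, Function.comp_apply, ev, Subtype.forall,
      AddMonoidHom.coe_prodMap, Prod.map, AddMonoidHom.coe_fst, AddMonoidHom.coe_snd,
      Pi.evalAddMonoidHom_apply]
    exact Iff.rfl
  rw [e]
  refine IsSemilinearSet.iUnion fun i => IsSemilinearSet.inter (IsSemilinearSet.iInter fun j => ?_) ?_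
  · exact isSemilinearSet_setOfPred_eq 0 0 _ _
  · exact semilinear_lt.preimage _

end semil
end SWM

namespace SWM
open Pointwise

section comb
variable {k s : ℕ} {X : ℕ → Type} [∀ n, PartialOrder (X n)]

abbrev Vk (k : ℕ) := Fin k → ℕ

def RelS (C : Fin s → ∀ n, (Fin n → Fin k) → X n) (p q : Fin s) : Set (Vk k × Vk k) :=
  {xy | ∃ (n : ℕ) (τ σ : Fin n → Fin k), cntv τ = xy.1 ∧ cntv σ = xy.2 ∧ C p n τ ≤ C q n σ}

def ResProp (C : Fin s → ∀ n, (Fin n → Fin k) → X n) : Prop :=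
  ∀ p q m n (ι : Fin m → Fin n), Function.Injective ι → ∀ τ σ : Fin n → Fin k,
    C p n τ ≤ C q n σ → C p m (τ ∘ ι) ≤ C q m (σ ∘ ι)

def rowHom (k : ℕ) : (Fin k × Fin k → ℕ) →+ Vk k :=
  { toFun := fun z i => ∑ j, z (i, j)
    map_zero' := by ext; simp
    map_add' := fun a b => by ext; simp [Finset.sum_add_distrib] }

def colHom (k : ℕ) : (Fin k × Fin k → ℕ) →+ Vk k :=
  { toFun := fun z j => ∑ i, z (i, j)
    map_zero' := by ext; simp
    map_add' := fun a b => by ext; simp [Finset.sum_add_distrib] }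

lemma rowHom_cntv {n : ℕ} (ρ : Fin n → Fin k × Fin k) :
    rowHom k (cntv ρ) = cntv (Prod.fst ∘ ρ) := by
  ext i
  simp only [rowHom, AddMonoidHom.coe_mk, ZeroHom.coe_mk, cntv, Fintype.card_subtype]
  rw [← Finset.card_biUnion]
  · congr 1; ext j; simp [Prod.ext_iff]
  · intro a _ b _ hab
    rw [Function.onFun, Finset.disjoint_left]
    intro j h1 h2
    simp only [Finset.mem_filter, Finset.mem_univ, true_and] at h1 h2
    rw [h1] at h2; simp at h2; exact hab h2

lemma colHom_cntv {n : ℕ} (ρ : Fin n → Fin k × Fin k) :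
    colHom k (cntv ρ) = cntv (Prod.snd ∘ ρ) := by
  ext i
  simp only [colHom, AddMonoidHom.coe_mk, ZeroHom.coe_mk, cntv, Fintype.card_subtype]
  rw [← Finset.card_biUnion]
  · congr 1; ext j; simp [Prod.ext_iff]
  · intro a _ b _ hab
    rw [Function.onFun, Finset.disjoint_left]
    intro j h1 h2
    simp only [Finset.mem_filter, Finset.mem_univ, true_and] at h1 h2
    rw [h1] at h2; simp at h2; exact hab h2

lemma RelS_semilinear (C : Fin s → ∀ n, (Fin n → Fin k) → X n) (hres : ResProp C) (p q : Fin s) :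
    IsSemilinearSet (RelS C p q) := by
  let S : Set (Fin k × Fin k → ℕ) := {z | ∃ (n : ℕ) (ρ : Fin n → Fin k × Fin k), cntv ρ = z ∧
    C p n (Prod.fst ∘ ρ) ≤ C q n (Prod.snd ∘ ρ)}
  have hS : IsLowerSet S := by
    rintro z y hyz ⟨n, ρ, rfl, h⟩
    obtain ⟨ρ', hρ'⟩ := exists_cntv y
    rw [← hρ'] at hyz ⊢
    obtain ⟨ι, hi, rfl⟩ := exists_emb _ _ hyz
    exact ⟨_, ρ ∘ ι, rfl, hres p q _ _ ι hi _ _ h⟩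
  have : RelS C p q = (AddMonoidHom.prod (rowHom k) (colHom k)) '' S := by
    ext ⟨x, y⟩
    constructor
    · rintro ⟨n, τ, σ, rfl, rfl, h⟩
      refine ⟨cntv (fun j => (τ j, σ j)), ⟨n, _, rfl, h⟩, ?_⟩
      simp only [AddMonoidHom.prod_apply, rowHom_cntv, colHom_cntv]
      rfl
    · rintro ⟨_, ⟨n, ρ, rfl, h⟩, h2⟩
      simp only [AddMonoidHom.prod_apply, rowHom_cntv, colHom_cntv] at h2
      rw [Prod.mk.injEq] at h2
      exact ⟨n, _, _, h2.1, h2.2, h⟩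
  rw [this]
  exact (semilinear_lower S hS).image _

variable (C : Fin s → ∀ n, (Fin n → Fin k) → X n)

lemma RelS_iff (hres : ResProp C) {p q : Fin s} {n : ℕ} (τ σ : Fin n → Fin k) :
    (cntv τ, cntv σ) ∈ RelS C p q ↔ ∃ π : Equiv.Perm (Fin n), C p n (τ ∘ π) ≤ C q n σ := by
  constructor
  · rintro ⟨m, τ', σ', h1, h2, h⟩
    simp only at h1 h2
    have : m = n := by rw [← tot_cntv τ', h1, tot_cntv]
    subst this
    obtain ⟨π, rfl⟩ := exists_perm τ' τ h1
    obtain ⟨π', rfl⟩ := exists_perm σ' σ h2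
    have := hres p q _ _ π'.symm π'.symm.injective _ _ h
    refine ⟨π'.symm.trans π, ?_⟩
    have e : (σ ∘ π') ∘ π'.symm = σ := by ext j; simp
    rw [e] at this
    exact this
  · rintro ⟨π, h⟩
    exact ⟨n, τ ∘ π, σ, cntv_perm τ π, rfl, h⟩

lemma RelS_iff' (hres : ResProp C) {p q : Fin s} {n : ℕ} (τ σ : Fin n → Fin k) :
    (cntv τ, cntv σ) ∈ RelS C p q ↔ ∃ π : Equiv.Perm (Fin n), C p n τ ≤ C q n (σ ∘ π) := by
  rw [RelS_iff C hres]
  constructor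
  · rintro ⟨π, h⟩
    refine ⟨π.symm, ?_⟩
    have := hres p q _ _ π.symm π.symm.injective _ _ h
    convert this using 2
    ext j; simp
  · rintro ⟨π, h⟩
    refine ⟨π.symm, ?_⟩
    have := hres p q _ _ π.symm π.symm.injective _ _ h
    convert this using 2
    ext j; simp

lemma perm_le (hres : ResProp C) {p : Fin s} {n : ℕ} (τ : Fin n → Fin k) (π : Equiv.Perm (Fin n))
    (h : C p n (τ ∘ π) ≤ C p n τ) : C p n τ ≤ C p n (τ ∘ π) := by
  have step : ∀ i : ℕ, C p n (τ ∘ (π ^ (i + 1) : Equiv.Perm (Fin n))) ≤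
      C p n (τ ∘ (π ^ i : Equiv.Perm (Fin n))) := by
    intro i
    have := hres p p _ _ (π ^ i : Equiv.Perm (Fin n)) (Equiv.injective _) _ _ h
    convert this using 2
    ext j; simp [pow_succ']
  have step2 : ∀ i : ℕ, C p n (τ ∘ (π ^ (i + 1) : Equiv.Perm (Fin n))) ≤ C p n (τ ∘ π) := by
    intro i
    induction i with
    | zero => simp
    | succ i ih => exact (step (i + 1)).trans ih
  have h3 := step2 (orderOf π - 1)
  have : orderOf π - 1 + 1 = orderOf π := Nat.sub_add_cancel (orderOf_pos π)
  rw [this, pow_orderOf_eq_one] at h3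
  simpa using h3


def ltP (q p : Fin s) : Set (Vk k × Vk k) :=
  {yx | q < p ∨ (q = p ∧ toLex yx.1 < toLex yx.2)}

lemma ltP_semilinear (q p : Fin s) : IsSemilinearSet (ltP (k := k) q p) := by
  rcases lt_trichotomy q p with h | h | h
  · convert IsSemilinearSet.univ (M := Vk k × Vk k)
    ext x; simp [ltP, h]
  · convert semilinear_lex k using 1
    ext x; simp [ltP, h]
  · convert IsSemilinearSet.empty (M := Vk k × Vk k)
    ext x; simp [ltP, h.le, h.ne']

variable (E : Fin s → Set (Vk k))

def Good (p : Fin s) : Set (Vk k) :=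
  {x | x ∈ E p ∧ (∀ q, ∀ y ∈ E q, (y, x) ∈ RelS C q p → (x, y) ∈ RelS C p q) ∧
    (∀ q, ∀ y ∈ E q, (y, x) ∈ ltP q p → ¬ ((y, x) ∈ RelS C q p ∧ (x, y) ∈ RelS C p q))}

def swapHom (k : ℕ) : Vk k × Vk k →+ Vk k × Vk k :=
  AddMonoidHom.prod (AddMonoidHom.snd _ _) (AddMonoidHom.fst _ _)

lemma Good_semilinear (hres : ResProp C) (hE : ∀ p, IsSemilinearSet (E p)) (p : Fin s) :
    IsSemilinearSet (Good C E p) := by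
  let fst := AddMonoidHom.fst (Vk k) (Vk k)
  let snd := AddMonoidHom.snd (Vk k) (Vk k)
  have e : Good C E p = E p ∩ ((⋂ q, (snd '' ((fst ⁻¹' E q) ∩ (RelS C q p ∩
      ((swapHom k) ⁻¹' RelS C p q)ᶜ)))ᶜ) ∩
      (⋂ q, (snd '' ((fst ⁻¹' E q) ∩ (ltP q p ∩ (RelS C q p ∩
      ((swapHom k) ⁻¹' RelS C p q)))))ᶜ)) := by
    ext x
    simp only [Good, Set.mem_ofPred_eq, Set.mem_inter_iff, Set.mem_iInter, Set.mem_compl_iff,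
      Set.mem_image, Set.mem_preimage, Prod.exists, not_exists, not_and]
    refine and_congr Iff.rfl (and_congr (forall_congr' fun q => ?_) (forall_congr' fun q => ?_))
    · constructor
      · rintro h y x' ⟨h1, h2⟩ rfl
        exact h2.2 (h y h1 h2.1)
      · intro h y hy h1
        by_contra h3
        exact h y x ⟨hy, h1, h3⟩ rfl
    · constructor
      · rintro h y x' ⟨h1, h2, h3, h4⟩ rfl
        exact h y h1 h2 h3 h4
      · intro h y hy h1 h2 h3
        exact h y x ⟨hy, h1, h2, h3⟩ rfl
  rw [e]
  have hR := RelS_semilinear C hres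
  refine (hE p).inter (IsSemilinearSet.inter (.iInter fun q => ?_) (.iInter fun q => ?_))
  · exact ((((hE q).preimage fst).inter ((hR q p).inter ((hR p q).preimage _).compl)).image
      snd).compl
  · exact ((((hE q).preimage fst).inter ((ltP_semilinear q p).inter ((hR q p).inter
      ((hR p q).preimage _)))).image snd).compl

/-- the family of candidates -/
def Cand (n : ℕ) : Set (X n) := {P | ∃ p τ, cntv τ ∈ E p ∧ P = C p n τ}

lemma EQP.sum {a : Fin s → ℕ → ℚ} (h : ∀ i, EQP (a i)) : EQP (fun n => ∑ i, a i n) := by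
  have : ∀ S : Finset (Fin s), EQP (fun n => ∑ i ∈ S, a i n) := by
    intro S
    induction S using Finset.induction_on with
    | empty => simpa using EQP.zero
    | insert i S hi ih =>
      refine ((h i).add ih).congr 0 fun n _ => ?_
      rw [Finset.sum_insert hi]
  exact this _

theorem count_orbits (hres : ResProp C) (hE : ∀ p, IsSemilinearSet (E p))
    (rel : ∀ n, X n → X n → Prop) (heq : ∀ n, Equivalence (rel n))
    (hrel : ∀ n p τ Q, rel n (C p n τ) Q ↔ ∃ π : Equiv.Perm (Fin n), Q = C p n (τ ∘ π)) :
    EQP (fun n => (Nat.card (Quot (fun P Q : {P // Minimal (· ∈ Cand C E n) P} =>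
      rel n P.1 Q.1)) : ℚ)) := by
  refine (EQP.sum fun p => count_semilinear (Good C E p) (Good_semilinear C E hres hE p)).congr 0
    fun n _ => ?_
  have hfin : ∀ p, Finite {x // x ∈ Good C E p ∧ tot x = n} := fun p =>
    ((tot_fin n).subset fun x hx => hx.2 : {x | x ∈ Good C E p ∧ tot x = n}.Finite)
  have e1 : ∑ p, cnt tot (Good C E p) n =
      (Nat.card (Σ p, {x // x ∈ Good C E p ∧ tot x = n}) : ℚ) := by
    rw [Nat.card_sigma]
    push_cast
    rfl
  rw [e1]
  congr 1
  have hτ : ∀ a : (Σ p, {x // x ∈ Good C E p ∧ tot x = n}), ∃ τ : Fin n → Fin k,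
    cntv τ = a.2.1 := fun a => exists_cntv' _ a.2.2.2
  choose T hT using hτ
  have hTmin : ∀ a, Minimal (· ∈ Cand C E n) (C a.1 n (T a)) := by
    rintro ⟨p, x, hx, hn⟩
    have hTx := hT ⟨p, x, hx, hn⟩
    generalize T ⟨p, x, hx, hn⟩ = τ at hTx ⊢
    simp only at hTx ⊢
    subst hTx
    refine ⟨⟨p, τ, hx.1, rfl⟩, ?_⟩
    rintro _ ⟨q, σ, hσ, rfl⟩ hle
    have h1 := hx.2.1 q (cntv σ) hσ ((RelS_iff C hres σ τ).2 ⟨1, by simpa using hle⟩)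
    obtain ⟨π, hπ⟩ := (RelS_iff C hres τ σ).1 h1
    exact (perm_le C hres τ π (hπ.trans hle)).trans hπ
  refine Nat.card_congr (Equiv.ofBijective (fun a => Quot.mk _ ⟨C a.1 n (T a), hTmin a⟩) ⟨?_, ?_⟩)
  · rintro a b hab
    have hequiv : Equivalence (fun P Q : {P // Minimal (· ∈ Cand C E n) P} => rel n P.1 Q.1) :=
      ⟨fun _ => (heq n).refl _, fun h => (heq n).symm h, fun h h' => (heq n).trans h h'⟩
    have hab := (hequiv.eqvGen_iff).1 (Quot.eqvGen_exact hab)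
    simp only at hab
    obtain ⟨π, hπ⟩ := (hrel n _ _ _).1 hab
    have r1 : (a.2.1, b.2.1) ∈ RelS C a.1 b.1 := by
      rw [← hT a, ← hT b]
      exact (RelS_iff C hres _ _).2 ⟨π, hπ.ge⟩
    have r2 : (b.2.1, a.2.1) ∈ RelS C b.1 a.1 := by
      rw [← hT a, ← hT b]
      exact (RelS_iff' C hres _ _).2 ⟨π, hπ.le⟩
    have n1 := a.2.2.1.2.2 b.1 b.2.1 b.2.2.1.1
    have n2 := b.2.2.1.2.2 a.1 a.2.1 a.2.2.1.1
    obtain ⟨p, x, hx⟩ := a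
    obtain ⟨q, y, hy⟩ := b
    simp only at r1 r2 n1 n2
    have hpq : p = q := by
      rcases lt_trichotomy p q with h | h | h
      · exact absurd ⟨r1, r2⟩ (n2 (Or.inl h))
      · exact h
      · exact absurd ⟨r2, r1⟩ (n1 (Or.inl h))
    subst hpq
    have hxy : x = y := by
      rcases lt_trichotomy (toLex x) (toLex y) with h | h | h
      · exact absurd ⟨r1, r2⟩ (n2 (Or.inr ⟨rfl, h⟩))
      · exact toLex.injective h
      · exact absurd ⟨r2, r1⟩ (n1 (Or.inr ⟨rfl, h⟩))
    subst hxy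
    rfl
  · intro Q
    obtain ⟨⟨P, hP⟩, rfl⟩ := Quot.exists_rep Q
    -- choose lexicographically least
    let W : Set (Fin s ×ₗ Lex (Vk k)) := {w | ∃ (τ : Fin n → Fin k),
      cntv τ = ofLex (ofLex w).2 ∧ cntv τ ∈ E (ofLex w).1 ∧ P = C (ofLex w).1 n τ}
    have hW : W.Nonempty := by
      obtain ⟨p, τ, h1, h2⟩ := hP.1
      exact ⟨toLex (p, toLex (cntv τ)), τ, rfl, h1, h2⟩
    obtain ⟨w, ⟨τ, h1, h2, h3⟩, hmin⟩ :=
      WellFounded.has_min (wellFounded_lt (α := Fin s ×ₗ Lex (Vk k))) W hW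
    obtain ⟨⟨p, x⟩, rfl⟩ := toLex.surjective w
    obtain ⟨x, rfl⟩ := toLex.surjective x
    simp only [ofLex_toLex] at h1 h2 h3
    subst h1
    have hgood : cntv τ ∈ Good C E p := by
      have hcond : ∀ q, ∀ y ∈ E q, (y, cntv τ) ∈ RelS C q p →
          ∃ σ : Fin n → Fin k, cntv σ = y ∧ P = C q n σ := by
        intro q y hy hr
        obtain ⟨m, σ, τ', hs, ht, h⟩ := id hr
        simp only at hs ht
        have : m = n := by rw [← tot_cntv τ', ht, tot_cntv]
        subst this
        subst hs
        obtain ⟨π, hπ⟩ := (RelS_iff C hres σ τ).1 hr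
        have hc : C q m (σ ∘ π) ∈ Cand C E m := ⟨q, _, by rwa [cntv_perm], rfl⟩
        rw [← h3] at hπ
        exact ⟨σ ∘ π, cntv_perm _ _, le_antisymm (hP.2 hc hπ) hπ⟩
      refine ⟨h2, fun q y hy hr => ?_, fun q y hy hlt hr => ?_⟩
      · obtain ⟨σ, rfl, hσ⟩ := hcond q y hy hr
        exact (RelS_iff C hres τ σ).2 ⟨1, by
          simp only [Equiv.Perm.coe_one, Function.comp_id]; rw [← h3, ← hσ]⟩
      · obtain ⟨σ, rfl, hσ⟩ := hcond q y hy hr.1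
        refine hmin (toLex (q, toLex (cntv σ))) ⟨σ, rfl, hy, hσ⟩ ?_
        rw [Prod.Lex.toLex_lt_toLex]
        exact hlt
    refine ⟨⟨p, cntv τ, hgood, tot_cntv τ⟩, Quot.sound ?_⟩
    have hTT := hT ⟨p, cntv τ, hgood, tot_cntv τ⟩
    simp only at hTT ⊢
    rw [hrel]
    obtain ⟨π, hπ⟩ := exists_perm τ _ hTT.symm
    exact ⟨π, by rw [hπ, h3]⟩

end comb
end SWM

namespace SWM
open MvPolynomial

abbrev AA (K : Type) [CommRing K] (c n : ℕ) := MvPolynomial (Fin c × Fin n) K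

noncomputable def rn {K : Type} [CommRing K] {c m n : ℕ} (ι : Fin m → Fin n) :
    AA K c m →ₐ[K] AA K c n :=
  rename (Prod.map id ι)

def IsChn {K : Type} [CommRing K] {c : ℕ} (I : ∀ n, Ideal (AA K c n)) : Prop :=
  ∀ m n (ι : Fin m → Fin n), Function.Injective ι → ∀ f ∈ I m, rn ι f ∈ I n

section noeth
variable {K : Type} [CommRing K] {c : ℕ}

/-- sort key of a monomial -/
def mkey {n : ℕ} (e : Fin c × Fin n →₀ ℕ) : Lex (Fin n → Lex (Fin c → ℕ)) :=
  toLex fun j => toLex fun i => e (i, j)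

lemma mkey_inj {n : ℕ} : Function.Injective (mkey : (Fin c × Fin n →₀ ℕ) → _) := by
  intro a b h
  ext ⟨i, j⟩
  have := congrFun (congrFun h j) i
  exact this

lemma mkey_add {n : ℕ} (a b : Fin c × Fin n →₀ ℕ) : mkey (a + b) = mkey a + mkey b := rfl

lemma mkey_map {m n : ℕ} (ι : Fin m → Fin n) (hi : StrictMono ι) (a b : Fin c × Fin m →₀ ℕ)
    (h : mkey a < mkey b) :
    mkey (a.mapDomain (Prod.map id ι)) < mkey (b.mapDomain (Prod.map id ι)) := by
  obtain ⟨j, h1, h2⟩ := h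
  have hinj : Function.Injective (Prod.map (id : Fin c → Fin c) ι) :=
    Function.injective_id.prodMap hi.injective
  have hval : ∀ (a : Fin c × Fin m →₀ ℕ) i j, (a.mapDomain (Prod.map id ι)) (i, ι j) = a (i, j) := by
    intro a i j
    exact Finsupp.mapDomain_apply hinj a (i, j)
  have hout : ∀ (a : Fin c × Fin m →₀ ℕ) i t, t ∉ Set.range ι →
      (a.mapDomain (Prod.map id ι)) (i, t) = 0 := by
    intro a i t ht
    refine Finsupp.mapDomain_of_notMem_range _ _ ?_
    rintro ⟨⟨i', j'⟩, h⟩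
    exact ht ⟨j', (Prod.mk.inj h).2⟩
  refine ⟨ι j, fun t ht => ?_, ?_⟩
  · by_cases hr : t ∈ Set.range ι
    · obtain ⟨j', rfl⟩ := hr
      have hj' : j' < j := hi.lt_iff_lt.1 ht
      have := h1 j' hj'
      refine congrArg toLex (funext fun i => ?_)
      exact (hval a i j').trans (Eq.trans (congrFun this i) (hval b i j').symm)
    · refine congrArg toLex (funext fun i => ?_)
      exact (hout a i t hr).trans (hout b i t hr).symm
  · have e : ∀ a : Fin c × Fin m →₀ ℕ, mkey (a.mapDomain (Prod.map id ι)) (ι j) = mkey a j := by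
      intro a
      refine congrArg toLex (funext fun i => ?_)
      exact hval a i j
    rw [e, e]; exact h2

def Bd {n : ℕ} (g : AA K c n) (e : Fin c × Fin n →₀ ℕ) : Prop :=
  ∀ e', mkey e < mkey e' → coeff e' g = 0

lemma exists_lead {n : ℕ} (g : AA K c n) (hg : g ≠ 0) : ∃ e, Bd g e ∧ coeff e g ≠ 0 := by
  have hne : g.support.Nonempty := by rwa [MvPolynomial.support_nonempty]
  obtain ⟨e, he, hmax⟩ := g.support.exists_max_image mkey hne
  refine ⟨e, fun e' h => ?_, mem_support_iff.1 he⟩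
  by_contra h'
  exact absurd (hmax e' (mem_support_iff.2 h')) (not_le.2 h)

lemma Bd_transport {m n : ℕ} (ι : Fin m → Fin n) (hi : StrictMono ι) (g : AA K c m)
    (e : Fin c × Fin m →₀ ℕ) (hb : Bd g e) (d : Fin c × Fin n →₀ ℕ) :
    Bd (monomial d 1 * rn ι g) (d + e.mapDomain (Prod.map id ι)) ∧
    coeff (d + e.mapDomain (Prod.map id ι)) (monomial d 1 * rn ι g) = coeff e g := by
  have hinj : Function.Injective (Prod.map (id : Fin c → Fin c) ι) :=
    Function.injective_id.prodMap hi.injective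
  constructor
  · intro e' he'
    rw [coeff_monomial_mul']
    split_ifs with hd
    swap
    · rfl
    obtain ⟨e'', rfl⟩ := exists_add_of_le hd
    rw [add_tsub_cancel_left, one_mul]
    rw [mkey_add, mkey_add] at he'
    have he' := lt_of_add_lt_add_left he'
    by_contra hne
    obtain ⟨u, rfl, hu⟩ := coeff_rename_ne_zero _ _ _ hne
    refine hu (hb u ?_)
    by_contra hle
    rcases (not_lt.1 hle).lt_or_eq with h | h
    · exact absurd (mkey_map ι hi _ _ h) (not_lt.2 he'.le)
    · rw [mkey_inj h] at he'; exact lt_irrefl _ he'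
  · rw [coeff_monomial_mul, one_mul]
    exact coeff_rename_mapDomain _ hinj _ _

def word {n : ℕ} (e : Fin c × Fin n →₀ ℕ) : List (Fin c → ℕ) :=
  List.ofFn fun j => fun i => e (i, j)

lemma word_embed {m n : ℕ} (a : Fin c × Fin m →₀ ℕ) (b : Fin c × Fin n →₀ ℕ)
    (h : List.SublistForall₂ (· ≤ ·) (word a) (word b)) :
    ∃ ι : Fin m → Fin n, StrictMono ι ∧ a.mapDomain (Prod.map id ι) ≤ b := by
  obtain ⟨l, hl, hs⟩ := List.sublistForall₂_iff.1 h
  obtain ⟨f, hf⟩ := List.sublist_iff_exists_fin_orderEmbedding_get_eq.1 hs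
  have hlen : l.length = m := by rw [← hl.length_eq]; simp [word]
  have hlen2 : (word b).length = n := by simp [word]
  let ι : Fin m → Fin n := fun j => (f (j.cast hlen.symm)).cast hlen2
  have hi : StrictMono ι := by
    intro x y hxy
    show (f _).val < (f _).val
    exact f.strictMono hxy
  have hle : ∀ i j, a (i, j) ≤ b (i, ι j) := by
    intro i j
    have h1 := List.forall₂_iff_get.1 hl
    have h2 := h1.2 j.1 (by simp [word]) (by rw [hlen]; exact j.2)
    have h3 := hf (j.cast hlen.symm)
    have h4 : l.get ⟨j.1, by rw [hlen]; exact j.2⟩ = (word b).get (f (j.cast hlen.symm)) := h3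
    rw [h4] at h2
    have h5 := h2 i
    simp only [word, List.get_eq_getElem, List.getElem_ofFn] at h5
    exact h5
  refine ⟨ι, hi, fun ⟨i, t⟩ => ?_⟩
  have hinj : Function.Injective (Prod.map (id : Fin c → Fin c) ι) :=
    Function.injective_id.prodMap hi.injective
  by_cases hr : t ∈ Set.range ι
  · obtain ⟨j, rfl⟩ := hr
    have := Finsupp.mapDomain_apply hinj a (i, j)
    simp only [Prod.map, id] at this
    have h2 : (Finsupp.mapDomain (Prod.map id ι) a) (i, ι j) = a (i, j) := this
    rw [h2]; exact hle i j
  · rw [Finsupp.mapDomain_of_notMem_range]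
    · exact Nat.zero_le _
    · rintro ⟨⟨i', j'⟩, h⟩
      exact hr ⟨j', (Prod.mk.inj h).2⟩

lemma word_wqo (f : ℕ → List (Fin c → ℕ)) :
    ∃ g : ℕ ↪o ℕ, ∀ m n : ℕ, m ≤ n → List.SublistForall₂ (· ≤ ·) (f (g m)) (f (g n)) := by
  have h := Set.PartiallyWellOrderedOn.partiallyWellOrderedOn_sublistForall₂
    (fun a b : Fin c → ℕ => a ≤ b) (s := Set.univ) (Set.isPWO_of_wellQuasiOrderedLE _)
  have : IsPreorder (List (Fin c → ℕ)) (List.SublistForall₂ fun a b => a ≤ b) :=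
    { refl := fun a => Std.Refl.refl a
      trans := fun a b c => IsTrans.trans a b c }
  exact h.exists_monotone_subseq (f := f) (fun n x _ => trivial)

theorem chain_acc [IsNoetherianRing K] (I : ℕ → ∀ n, Ideal (AA K c n)) (hI : ∀ k, IsChn (I k))
    (hlt : ∀ k, I k < I (k + 1)) : False := by
  have hmono : Monotone I := monotone_nat_of_le_succ fun k => (hlt k).le
  -- a level where they differ
  have h1 : ∀ k, ∃ n, ∃ g, g ∈ I (k + 1) n ∧ g ∉ I k n := by
    intro k
    by_contra h
    push Not at h
    exact (hlt k).not_ge fun n g hg => h n g hg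
  choose N hN using h1
  let Sk : ∀ k, Set (Fin c × Fin (N k) →₀ ℕ) := fun k =>
    {e | ∃ g, g ∈ I (k + 1) (N k) ∧ g ∉ I k (N k) ∧ Bd g e}
  have hSk : ∀ k, (Sk k).Nonempty := by
    intro k
    obtain ⟨g, hg, hg'⟩ := hN k
    have : g ≠ 0 := fun h => hg' (by rw [h]; exact zero_mem _)
    obtain ⟨e, he, _⟩ := exists_lead g this
    exact ⟨e, g, hg, hg', he⟩
  have hmin : ∀ k, ∃ e ∈ Sk k, ∀ e' ∈ Sk k, ¬ mkey e' < mkey e := by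
    intro k
    obtain ⟨x, ⟨e, he, rfl⟩, hx⟩ := WellFounded.has_min
      (wellFounded_lt (α := Lex (Fin (N k) → Lex (Fin c → ℕ)))) (mkey '' Sk k) ((hSk k).image _)
    exact ⟨e, he, fun e' he' => hx _ ⟨e', he', rfl⟩⟩
  choose e heS hemin using hmin
  choose g hg1 hg2 hg3 using heS
  obtain ⟨φ, hφ⟩ := word_wqo (fun k => word (e k))
  let a : ℕ → K := fun i => coeff (e (φ i)) (g (φ i))
  obtain ⟨M, hM⟩ := monotone_stabilizes_iff_noetherian.2 (inferInstance : IsNoetherian K K)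
    ⟨fun i => Ideal.span (a '' Set.Iio i), fun i j hij => Ideal.span_mono (Set.image_mono
      (Set.Iio_subset_Iio hij))⟩
  have hmem : a M ∈ Ideal.span (a '' Set.Iio M) := by
    have h := hM (M + 1) (Nat.le_succ M)
    change Ideal.span (a '' Set.Iio M) = Ideal.span (a '' Set.Iio (M + 1)) at h
    rw [h]
    exact Ideal.subset_span ⟨M, Nat.lt_succ_self M, rfl⟩
  -- an element of I (φ M) with the same leading term
  have key : ∀ x ∈ Ideal.span (a '' Set.Iio M), ∃ f ∈ I (φ M) (N (φ M)), Bd f (e (φ M)) ∧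
      coeff (e (φ M)) f = x := by
    intro x hx
    induction hx using Submodule.span_induction with
    | mem x hx =>
      obtain ⟨l, hl, rfl⟩ := hx
      obtain ⟨ι, hi, hle⟩ := word_embed _ _ (hφ l M (le_of_lt hl))
      obtain ⟨d, hd⟩ := exists_add_of_le hle
      have ht := Bd_transport ι hi (g (φ l)) (e (φ l)) (hg3 _) d
      rw [add_comm, ← hd] at ht
      refine ⟨monomial d 1 * rn ι (g (φ l)), Ideal.mul_mem_left _ _ ?_, ht.1, ht.2⟩
      have hlt : φ l < φ M := φ.strictMono hl
      exact hmono (Nat.succ_le_of_lt hlt) _ (hI _ _ _ ι hi.injective _ (hg1 _))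
    | zero => exact ⟨0, zero_mem _, fun _ _ => coeff_zero _, coeff_zero _⟩
    | add x y _ _ hx hy =>
      obtain ⟨f, h1, h2, h3⟩ := hx
      obtain ⟨f', h1', h2', h3'⟩ := hy
      exact ⟨f + f', add_mem h1 h1', fun e' h => by rw [coeff_add, h2 e' h, h2' e' h, add_zero],
        by rw [coeff_add, h3, h3']⟩
    | smul r x _ hx =>
      obtain ⟨f, h1, h2, h3⟩ := hx
      exact ⟨C r * f, Ideal.mul_mem_left _ _ h1, fun e' h => by rw [coeff_C_mul, h2 e' h, mul_zero],
        by rw [coeff_C_mul, h3]; rfl⟩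
  obtain ⟨f, hf1, hf2, hf3⟩ := key _ hmem
  have hg' : g (φ M) - f ∉ I (φ M) (N (φ M)) := fun h => hg2 (φ M) (by simpa using add_mem h hf1)
  have hne : g (φ M) - f ≠ 0 := fun h => hg' (by rw [h]; exact zero_mem _)
  obtain ⟨e', hb, hc⟩ := exists_lead _ hne
  have hlt' : mkey e' < mkey (e (φ M)) := by
    rcases lt_trichotomy (mkey e') (mkey (e (φ M))) with h | h | h
    · exact h
    · exfalso
      apply hc
      rw [mkey_inj h, coeff_sub, hf3]
      exact sub_self _
    · exfalso
      apply hc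
      rw [coeff_sub, hf2 _ h, hg3 (φ M) _ h, sub_zero]
  exact hemin (φ M) e' ⟨_, sub_mem (hg1 (φ M)) (hmono (Nat.le_succ (φ M)) _ hf1), hg', hb⟩ hlt'

/-- Noetherian induction on chains. -/
theorem chain_induction [IsNoetherianRing K] (P : (∀ n, Ideal (AA K c n)) → Prop)
    (h : ∀ I, IsChn I → (∀ J, IsChn J → I < J → P J) → P I) (I : ∀ n, Ideal (AA K c n))
    (hI : IsChn I) : P I := by
  have wf : WellFounded (fun I J : {I : ∀ n, Ideal (AA K c n) // IsChn I} => J.1 < I.1) := by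
    have : IsStrictOrder {I : ∀ n, Ideal (AA K c n) // IsChn I} (fun I J => J.1 < I.1) :=
      { irrefl := fun U h => lt_irrefl _ h
        trans := fun U V W h1 h2 => h2.trans h1 }
    rw [RelEmbedding.wellFounded_iff_isEmpty]
    refine ⟨fun f => chain_acc (fun k => (f k).1) (fun k => (f k).2) fun k => ?_⟩
    exact f.map_rel_iff.2 (Nat.lt_succ_self k)
  exact wf.induction (C := fun V : {I : ∀ n, Ideal (AA K c n) // IsChn I} => P V.1) ⟨I, hI⟩
    (fun V ih => h V.1 V.2 fun W hW hlt => ih ⟨W, hW⟩ hlt)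

end noeth
end SWM

namespace SWM
open MvPolynomial

/-- evaluation at a tuple of columns -/
noncomputable def evw {K : Type} [CommRing K] {c n : ℕ} {F : Type} [CommRing F] [Algebra K F]
    (w : Fin n → Fin c → F) : AA K c n →ₐ[K] F := aeval fun p => w p.2 p.1

lemma evw_rn {K : Type} [CommRing K] {c m n : ℕ} {F : Type} [CommRing F] [Algebra K F]
    (ι : Fin m → Fin n) (w : Fin n → Fin c → F) (g : AA K c m) :
    evw w (rn ι g) = evw (K := K) (w ∘ ι) g := by
  unfold evw rn
  rw [aeval_rename]; rfl

lemma rn_comp {K : Type} [CommRing K] {c l m n : ℕ} (ι : Fin m → Fin n) (κ : Fin l → Fin m)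
    (g : AA K c l) : rn ι (rn κ g) = rn (ι ∘ κ) g := by
  unfold rn; rw [rename_rename]; rfl

lemma rn_id {K : Type} [CommRing K] {c n : ℕ} (g : AA K c n) : rn id g = g := by
  unfold rn; rw [Prod.map_id, rename_id]; rfl

structure Patch (K : Type) [CommRing K] (c : ℕ) where
  F : Type
  [fld : Field F]
  [alg : Algebra K F]
  V : ℕ → Set (Fin c → F)
  ne : ∀ l, (V l).Nonempty
  irr : ∀ l (f g : MvPolynomial (Fin c) F), (∃ x ∈ V l, eval x f ≠ 0) → (∃ x ∈ V l, eval x g ≠ 0) →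
    ∃ x ∈ V l, eval x f ≠ 0 ∧ eval x g ≠ 0
  n0 : ℕ
  k : ℕ

attribute [instance] Patch.fld Patch.alg

namespace Patch
variable {K : Type} [CommRing K] {c : ℕ} (p : Patch K c)

def pts {n : ℕ} (τ : Fin n → ℕ) : Set (Fin n → Fin c → p.F) := {w | ∀ j, w j ∈ p.V (τ j)}

noncomputable def I {n : ℕ} (τ : Fin n → ℕ) : Ideal (AA K c n) :=
  ⨅ w : p.pts τ, RingHom.ker (evw (K := K) w.1)

lemma mem_I {n : ℕ} (τ : Fin n → ℕ) (g : AA K c n) :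
    g ∈ p.I τ ↔ ∀ w ∈ p.pts τ, evw w g = 0 := by
  simp [I, Ideal.mem_iInf, RingHom.mem_ker]

def Adm {n : ℕ} (τ : Fin n → ℕ) : Prop := (∀ j, τ j < p.k) ∧ ∀ b < p.n0, ∃! j, τ j = b

lemma rn_mem_I {m n : ℕ} (ι : Fin m → Fin n) (hi : Function.Injective ι) (τ : Fin n → ℕ)
    (g : AA K c m) : rn ι g ∈ p.I τ ↔ g ∈ p.I (τ ∘ ι) := by
  rw [mem_I, mem_I]
  constructor
  · intro h w hw
    choose v hv using p.ne
    have := h (fun j => if hj : ∃ i, ι i = j then w hj.choose else v (τ j)) (by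
      intro j
      dsimp only
      split_ifs with hj
      · have := hw hj.choose
        simp only [Function.comp] at this
        rwa [hj.choose_spec] at this
      · exact hv _)
    rw [evw_rn] at this
    convert this using 2
    congr 1
    funext i
    have hj : ∃ i', ι i' = ι i := ⟨i, rfl⟩
    simp only [Function.comp, dif_pos hj]
    rw [hi hj.choose_spec]
  · intro h w hw
    rw [evw_rn]
    exact h _ fun j => hw (ι j)

lemma exists_col {n : ℕ} (f : AA K c n) (w : Fin n → Fin c → p.F) (j : Fin n) :
    ∃ f1 : MvPolynomial (Fin c) p.F, ∀ y, eval y f1 = evw (Function.update w j y) f := by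
  classical
  refine ⟨aeval (fun q : Fin c × Fin n => if q.2 = j then X q.1 else C (w q.2 q.1)) f, fun y => ?_⟩
  unfold evw
  induction f using MvPolynomial.induction_on with
  | C a =>
    rw [algHom_C, algHom_C]
    rw [IsScalarTower.algebraMap_apply K p.F (MvPolynomial (Fin c) p.F)]
    simp
  | add f g hf hg => simp only [map_add, hf, hg]
  | mul_X f q hf =>
    simp only [map_mul, hf, aeval_X]
    congr 1
    by_cases hq : q.2 = j
    · rw [if_pos hq, eval_X, hq, Function.update_self]
    · rw [if_neg hq, eval_C, Function.update_of_ne hq]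

lemma merge {n : ℕ} (τ : Fin n → ℕ) (f g : AA K c n) (S : Finset (Fin n)) :
    ∀ w ∈ p.pts τ, ∀ w' ∈ p.pts τ, (∀ j, j ∉ S → w j = w' j) → evw w f ≠ 0 → evw w' g ≠ 0 →
      ∃ v ∈ p.pts τ, evw v f ≠ 0 ∧ evw v g ≠ 0 := by
  classical
  induction S using Finset.induction_on with
  | empty =>
    intro w hw w' hw' h hf hg
    have : w = w' := funext fun j => h j (by simp)
    subst this
    exact ⟨w, hw, hf, hg⟩
  | insert j S _ ih =>
    intro w hw w' hw' h hf hg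
    obtain ⟨f1, hf1⟩ := p.exists_col f w j
    obtain ⟨g1, hg1⟩ := p.exists_col g w' j
    obtain ⟨y, hy, h1, h2⟩ := p.irr (τ j) f1 g1
      ⟨w j, hw j, by rw [hf1, Function.update_eq_self]; exact hf⟩
      ⟨w' j, hw' j, by rw [hg1, Function.update_eq_self]; exact hg⟩
    rw [hf1] at h1
    rw [hg1] at h2
    refine ih _ ?_ _ ?_ ?_ h1 h2
    · intro i
      by_cases hi : i = j
      · subst hi; rw [Function.update_self]; exact hy
      · rw [Function.update_of_ne hi]; exact hw i
    · intro i
      by_cases hi : i = j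
      · subst hi; rw [Function.update_self]; exact hy
      · rw [Function.update_of_ne hi]; exact hw' i
    · intro i hiS
      by_cases hi : i = j
      · subst hi; rw [Function.update_self, Function.update_self]
      · rw [Function.update_of_ne hi, Function.update_of_ne hi]
        exact h i (by simp [hi, hiS])

lemma I_prime {n : ℕ} (τ : Fin n → ℕ) : (p.I τ).IsPrime := by
  constructor
  · intro h
    have h1 : (1 : AA K c n) ∈ p.I τ := by rw [h]; trivial
    rw [mem_I] at h1
    choose v hv using p.ne
    have := h1 (fun j => v (τ j)) (fun j => hv _)
    simp at this
  · intro f g hfg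
    by_contra h
    push Not at h
    obtain ⟨hf, hg⟩ := h
    rw [mem_I] at hf hg hfg
    push Not at hf hg
    obtain ⟨w, hw, hf⟩ := hf
    obtain ⟨w', hw', hg⟩ := hg
    obtain ⟨v, hv, h1, h2⟩ := p.merge τ f g Finset.univ w hw w' hw' (by simp) hf hg
    have := hfg v hv
    rw [map_mul] at this
    exact (mul_ne_zero h1 h2) this

end Patch

lemma exists_perm_ext {m n : ℕ} (ι κ : Fin m → Fin n) (hi : Function.Injective ι)
    (hk : Function.Injective κ) : ∃ π : Equiv.Perm (Fin n), π ∘ ι = κ := by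
  obtain ⟨g, hg⟩ := (Equiv.Perm.isMultiplyPretransitive (Fin n) m).exists_smul_eq ⟨ι, hi⟩ ⟨κ, hk⟩
  refine ⟨g, funext fun j => ?_⟩
  exact DFunLike.congr_fun hg j

def Covered {K : Type} [CommRing K] {c : ℕ} (I : ∀ n, Ideal (AA K c n)) : Prop :=
  ∃ l : List (Patch K c), (∀ n, ∀ p ∈ l, ∀ τ : Fin n → ℕ, p.Adm τ → I n ≤ p.I τ) ∧
    ∀ n, ∀ P : Ideal (AA K c n), P.IsPrime → I n ≤ P → ∃ p ∈ l, ∃ τ, p.Adm τ ∧ p.I τ ≤ P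

/-- standard-position version implies the general one -/
def StepStd {K : Type} [CommRing K] {c : ℕ} (J : ∀ n, Ideal (AA K c n)) : Prop :=
  ∃ (p : Patch K c) (h : AA K c p.n0), h ∉ J p.n0 ∧
    (∀ n (hn : p.n0 ≤ n) (τ : Fin n → ℕ), p.Adm τ → (∀ b, τ (Fin.castLE hn b) = b) → J n ≤ p.I τ) ∧
    ∀ n (hn : p.n0 ≤ n) (P : Ideal (AA K c n)), P.IsPrime → J n ≤ P → rn (Fin.castLE hn) h ∉ P →
      ∃ τ, p.Adm τ ∧ p.I τ ≤ P

theorem covered_of_step {K : Type} [CommRing K] [IsNoetherianRing K] {c : ℕ}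
    (step : ∀ J : ∀ n, Ideal (AA K c n), IsChn J → (∀ n, (J n).IsRadical) → (∃ n, J n ≠ ⊤) →
      StepStd J) (I : ∀ n, Ideal (AA K c n)) (hI : IsChn I) : Covered I := by
  refine chain_induction Covered ?_ I hI
  clear hI I
  intro I hI IH
  have hIJ : ∀ n, I n ≤ (I n).radical := fun n => Ideal.le_radical
  have hJ : IsChn fun n => (I n).radical := by
    intro m n ι hι f hf
    obtain ⟨k, hk⟩ := hf
    exact ⟨k, by rw [← map_pow]; exact hI _ _ ι hι _ hk⟩
  by_cases htop : ∃ n, (I n).radical ≠ ⊤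
  swap
  · push Not at htop
    refine ⟨[], by simp, fun n P hP hle => ?_⟩
    exfalso
    apply hP.ne_top
    rw [eq_top_iff, ← htop n]
    exact hP.radical_le_iff.2 hle
  obtain ⟨p, h, hh, h1, h2⟩ := step _ hJ (fun n => Ideal.radical_isRadical _) htop
  let J' : ∀ n, Ideal (AA K c n) := fun n => (I n).radical ⊔
    Ideal.span {x | ∃ ι : Fin p.n0 → Fin n, Function.Injective ι ∧ x = rn ι h}
  have hJ' : IsChn J' := by
    intro m n κ hκ
    show J' m ≤ Ideal.comap (rn κ) (J' n)
    refine sup_le (fun f hf => ?_) (Ideal.span_le.2 ?_)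
    · exact Ideal.mem_sup_left (hJ _ _ κ hκ f hf)
    · rintro _ ⟨ι, hι, rfl⟩
      refine Ideal.mem_sup_right (Ideal.subset_span ⟨κ ∘ ι, hκ.comp hι, ?_⟩)
      exact rn_comp _ _ _
  have hlt : I < J' := by
    refine lt_of_le_not_ge (fun n => (hIJ n).trans le_sup_left) fun hle => ?_
    apply hh
    refine hIJ _ (hle p.n0 (Ideal.mem_sup_right (Ideal.subset_span ⟨id, Function.injective_id, ?_⟩)))
    rw [rn_id]
  obtain ⟨l, hl1, hl2⟩ := IH J' hJ' hlt
  refine ⟨p :: l, ?_, ?_⟩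
  · intro n q hq τ hτ
    rw [List.mem_cons] at hq
    rcases hq with rfl | hq
    · choose ι hι hu using hτ.2
      have hinj : Function.Injective (fun b : Fin q.n0 => ι b.1 b.2) := by
        intro a b hab
        have := hι a.1 a.2
        dsimp only at hab this
        rw [hab] at this
        have h2 := hι b.1 b.2
        exact Fin.ext (this.symm.trans h2)
      have hn : q.n0 ≤ n := by simpa using Fintype.card_le_of_injective _ hinj
      obtain ⟨π, hπ⟩ := exists_perm_ext (Fin.castLE hn) _ (Fin.castLE_injective hn) hinj
      have hadm : q.Adm (τ ∘ π) := by
        refine ⟨fun j => hτ.1 _, fun b hb => ⟨π.symm (ι b hb), by simp [hι b hb], fun j hj => ?_⟩⟩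
        rw [← hu b hb (π j) hj]; simp
      have hstd : ∀ b, (τ ∘ π) (Fin.castLE hn b) = b := by
        intro b
        have := congrFun hπ b
        simp only [Function.comp] at this ⊢
        rw [this]; exact hι b.1 b.2
      intro g hg
      have h3 := h1 n hn _ hadm hstd (hJ _ _ π.symm π.symm.injective g (hIJ n hg))
      rw [q.rn_mem_I _ π.symm.injective] at h3
      convert h3 using 2
      funext j; simp
    · exact ((hIJ n).trans le_sup_left).trans (hl1 n q hq τ hτ)
  · intro n P hP hle
    have hle' : (I n).radical ≤ P := hP.radical_le_iff.2 hle
    by_cases hex : ∃ ι : Fin p.n0 → Fin n, Function.Injective ι ∧ rn ι h ∉ P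
    · obtain ⟨ι, hι, hιP⟩ := hex
      have hn : p.n0 ≤ n := by simpa using Fintype.card_le_of_injective _ hι
      obtain ⟨π, hπ⟩ := exists_perm_ext (Fin.castLE hn) _ (Fin.castLE_injective hn) hι
      obtain ⟨τ, hτ, hτP⟩ := h2 n hn (Ideal.comap (rn π) P) (hP.comap _)
        (fun g hg => hle' (hJ _ _ π π.injective g hg)) (by
          rw [Ideal.mem_comap, rn_comp, hπ]; exact hιP)
      refine ⟨p, List.mem_cons_self, τ ∘ π.symm, ⟨fun j => hτ.1 _, fun b hb => ?_⟩, fun g hg => ?_⟩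
      · obtain ⟨j, hj, hj'⟩ := hτ.2 b hb
        refine ⟨π j, by simp [hj], fun i hi => ?_⟩
        rw [← hj' _ hi]; simp
      · rw [← p.rn_mem_I _ π.symm.injective] at hg
        have := hτP hg
        rw [Ideal.mem_comap, rn_comp] at this
        have e : (π ∘ π.symm : Fin n → Fin n) = id := by funext j; simp
        rwa [e, rn_id] at this
    · push Not at hex
      obtain ⟨q, hq, τ, hτ⟩ := hl2 n P hP (sup_le hle' (Ideal.span_le.2 (by
        rintro _ ⟨ι, hι, rfl⟩
        exact hex ι hι)))
      exact ⟨q, List.mem_cons_of_mem _ hq, τ, hτ⟩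

end SWM

namespace SWM
open MvPolynomial

lemma exists_cofactor {R : Type} [CommRing R] [IsNoetherianRing R] (J q : Ideal R)
    (hJ : J.IsRadical) (hq : q ∈ J.minimalPrimes) : ∃ b ∉ q, ∀ x ∈ q, b * x ∈ J := by
  classical
  let T := (Ideal.finite_minimalPrimes_of_isNoetherianRing R J).toFinset.erase q
  have hqp : q.IsPrime := hq.1.1
  have h1 : ¬ T.inf id ≤ q := by
    intro h
    obtain ⟨q', hq', hle⟩ := (Ideal.IsPrime.inf_le' hqp).1 h
    simp only [T, Finset.mem_erase, Set.Finite.mem_toFinset] at hq'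
    exact hq'.1 (le_antisymm hle (hq.2 hq'.2.1 hle))
  obtain ⟨b, hb, hbq⟩ := SetLike.not_le_iff_exists.1 h1
  refine ⟨b, hbq, fun x hx => ?_⟩
  rw [← hJ.radical, ← Ideal.sInf_minimalPrimes, Ideal.mem_sInf]
  intro q' hq'
  by_cases he : q' = q
  · subst he; exact Ideal.mul_mem_left _ _ hx
  · refine Ideal.mul_mem_right _ _ ?_
    have : T.inf id ≤ q' := Finset.inf_le (f := id)
      (by simp only [T, Finset.mem_erase, Set.Finite.mem_toFinset]; exact ⟨he, hq'⟩)
    exact this hb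

section
variable {K : Type} [CommRing K] {c : ℕ}

noncomputable abbrev ky (c : ℕ) : (Fin c →₀ ℕ) ≃+ (MonomialOrder.lex (σ := Fin c)).syn :=
  (MonomialOrder.lex (σ := Fin c)).toSyn

noncomputable def psi (n : ℕ) : MvPolynomial (Fin c) (AA K c n) →+* AA K c (n + 1) :=
  eval₂Hom (rn (K := K) (c := c) Fin.castSucc).toRingHom fun i => X (i, Fin.last n)

lemma psi_C {n : ℕ} (a : AA K c n) : psi n (C a) = rn Fin.castSucc a := by
  simp [psi]

lemma psi_X {n : ℕ} (i : Fin c) : psi (K := K) n (X i) = X (i, Fin.last n) := by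
  simp [psi]

lemma rn_X {m n : ℕ} (ι : Fin m → Fin n) (i : Fin c) (j : Fin m) :
    rn (K := K) ι (X (i, j)) = X (i, ι j) := by simp [rn]

lemma rn_C {m n : ℕ} (ι : Fin m → Fin n) (a : K) :
    rn (K := K) (c := c) ι (C a) = C a := by simp [rn]

lemma psi_surj (n : ℕ) : Function.Surjective (psi (K := K) (c := c) n) := by
  intro g
  induction g using MvPolynomial.induction_on with
  | C a => exact ⟨C (C a), by rw [psi_C, rn_C]⟩
  | add f g hf hg =>
    obtain ⟨f, rfl⟩ := hf
    obtain ⟨g, rfl⟩ := hg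
    exact ⟨f + g, map_add _ _ _⟩
  | mul_X f q hf =>
    obtain ⟨f, rfl⟩ := hf
    obtain ⟨i, j⟩ := q
    induction j using Fin.lastCases with
    | last => exact ⟨f * X i, by rw [map_mul, psi_X]⟩
    | cast j => exact ⟨f * C (X (i, j)), by rw [map_mul, psi_C, rn_X]⟩

/-- general "substitute a column" map -/
lemma psi_nat {m n : ℕ} {R : Type} [CommRing R] (χ : AA K c n →+* R)
    (ι : Fin (m + 1) → Fin n) (f : MvPolynomial (Fin c) (AA K c m)) :
    χ (rn ι (psi m f)) =
      eval₂ (χ.comp (rn (K := K) (c := c) (ι ∘ Fin.castSucc)).toRingHom)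
        (fun i => χ (X (i, ι (Fin.last m)))) f := by
  induction f using MvPolynomial.induction_on with
  | C a => simp [psi_C, rn_comp]
  | add f g hf hg => rw [map_add, map_add, map_add, hf, hg, eval₂_add]
  | mul_X f i hf => rw [map_mul, map_mul, map_mul, hf, eval₂_mul, eval₂_X, psi_X, rn_X]

def up {m n : ℕ} (ι : Fin m → Fin n) : Fin (m + 1) → Fin (n + 1) :=
  Fin.snoc (α := fun _ => Fin (n + 1)) (fun j => (ι j).castSucc) (Fin.last n)

lemma up_castSucc {m n : ℕ} (ι : Fin m → Fin n) (j : Fin m) :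
    up ι j.castSucc = (ι j).castSucc := by simp [up]

lemma up_last {m n : ℕ} (ι : Fin m → Fin n) : up ι (Fin.last m) = Fin.last n := by simp [up]

lemma up_inj {m n : ℕ} (ι : Fin m → Fin n) (hi : Function.Injective ι) :
    Function.Injective (up ι) := by
  intro a b
  induction a using Fin.lastCases with
  | last =>
    induction b using Fin.lastCases with
    | last => simp
    | cast b =>
      rw [up_last, up_castSucc]; intro h; exact absurd h.symm (Fin.castSucc_lt_last _).ne
  | cast a =>
    induction b using Fin.lastCases with
    | last => rw [up_last, up_castSucc]; intro h; exact absurd h (Fin.castSucc_lt_last _).ne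
    | cast b =>
      rw [up_castSucc, up_castSucc]; intro h
      rw [hi (Fin.castSucc_injective _ h)]

lemma psi_map {m n : ℕ} (ι : Fin m → Fin n) (f : MvPolynomial (Fin c) (AA K c m)) :
    psi n (map (rn (K := K) (c := c) ι).toRingHom f) = rn (up ι) (psi m f) := by
  induction f using MvPolynomial.induction_on with
  | C a =>
    rw [map_C, psi_C, psi_C]
    show rn _ (rn ι a) = _
    rw [rn_comp, rn_comp]
    congr 1
    congr 1
    funext j
    simp [up_castSucc]
  | add f g hf hg => simp only [map_add, hf, hg]
  | mul_X f i hf => simp only [map_mul, hf, map_X, psi_X, rn_X, up_last]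

variable (J : ∀ n, Ideal (AA K c n))

def EE (n : ℕ) (q : Ideal (AA K c n)) : Set (Fin c →₀ ℕ) :=
  {α | ∃ f, psi n f ∈ J (n + 1) ∧ coeff α f ∉ q ∧ ∀ β, ky c α < ky c β → coeff β f = 0}

lemma EE_upper (n : ℕ) (q : Ideal (AA K c n)) : IsUpperSet (EE J n q) := by
  rintro α β hle ⟨f, hf, h1, h2⟩
  obtain ⟨δ, rfl⟩ := exists_add_of_le hle
  refine ⟨monomial δ 1 * f, ?_, ?_, ?_⟩
  · rw [map_mul]; exact Ideal.mul_mem_left _ _ hf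
  · rw [add_comm, coeff_monomial_mul, one_mul]; exact h1
  · intro γ hγ
    rw [coeff_monomial_mul']
    split_ifs with hd
    · obtain ⟨ε, rfl⟩ := exists_add_of_le hd
      rw [add_tsub_cancel_left, one_mul]
      apply h2
      rw [map_add, map_add, add_comm] at hγ
      exact lt_of_add_lt_add_left hγ
    · rfl

/-- the data produced by the maximal choice -/
structure Dat where
  n0 : ℕ
  q : Ideal (AA K c n0)
  hq : q ∈ (J n0).minimalPrimes
  h : AA K c n0
  hh : h ∉ q
  hE : ∀ β ∈ EE J n0 q, ∃ f, psi n0 f ∈ J (n0 + 1) ∧ coeff β f = h ∧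
    ∀ γ, ky c β < ky c γ → coeff γ f = 0
  hJ : ∀ x ∈ q, h * x ∈ J n0
  hmax : ∀ n (q' : Ideal (AA K c n)), q' ∈ (J n).minimalPrimes → ¬ EE J n0 q ⊂ EE J n q'

lemma exists_dat [IsNoetherianRing K] (hrad : ∀ n, (J n).IsRadical) (hne : ∃ n, J n ≠ ⊤) :
    Nonempty (Dat J) := by
  classical
  let S : Set {U : Set (Fin c →₀ ℕ) // IsUpperSet U} :=
    {U | ∃ n, ∃ q ∈ (J n).minimalPrimes, U.1 = EE J n q}
  have hS : S.Nonempty := by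
    obtain ⟨n, hn⟩ := hne
    obtain ⟨q, hq⟩ := Ideal.nonempty_minimalPrimes hn
    exact ⟨⟨EE J n q, EE_upper J n q⟩, n, q, hq, rfl⟩
  obtain ⟨U, ⟨n0, q, hq, hU⟩, hmin⟩ := WellFounded.has_min upper_acc S hS
  have hqp : q.IsPrime := hq.1.1
  have hfin : {x | Minimal (· ∈ EE J n0 q) x}.Finite :=
    WellQuasiOrderedLE.finite_of_isAntichain (setOfPred_minimal_antichain _)
  let B := hfin.toFinset
  have hB : ∀ b : B, b.1 ∈ EE J n0 q := fun b => ((hfin.mem_toFinset).1 b.2).1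
  choose f hf1 hf2 hf3 using hB
  obtain ⟨b, hb, hbJ⟩ := exists_cofactor _ _ (hrad n0) hq
  refine ⟨⟨n0, q, hq, (∏ b, coeff b.1 (f b)) * b, ?_, ?_, ?_, ?_⟩⟩
  · intro h
    rcases hqp.mem_or_mem h with h | h
    · obtain ⟨b, _, hb⟩ := (Ideal.IsPrime.prod_mem_iff (hp := hqp)).1 h
      exact hf2 b hb
    · exact hb h
  · intro β hβ
    obtain ⟨α, hle, hα⟩ := (Set.isPWO_of_wellQuasiOrderedLE (EE J n0 q)).exists_le_minimal hβ
    obtain ⟨δ, rfl⟩ := exists_add_of_le hle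
    let a : B := ⟨α, hfin.mem_toFinset.2 hα⟩
    refine ⟨monomial δ ((∏ b ∈ Finset.univ.erase a, coeff b.1 (f b)) * b) * f a, ?_, ?_, ?_⟩
    · rw [map_mul]; exact Ideal.mul_mem_left _ _ (hf1 a)
    · rw [add_comm, coeff_monomial_mul,
        ← Finset.mul_prod_erase Finset.univ (fun b : B => coeff b.1 (f b)) (Finset.mem_univ a)]
      ring
    · intro γ hγ
      rw [coeff_monomial_mul']
      split_ifs with hd
      · obtain ⟨ε, rfl⟩ := exists_add_of_le hd
        rw [add_tsub_cancel_left, hf3 a, mul_zero]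
        rw [map_add, map_add, add_comm] at hγ
        exact lt_of_add_lt_add_left hγ
      · rfl
  · intro x hx
    rw [mul_assoc]
    exact Ideal.mul_mem_left _ _ (hbJ x hx)
  · intro n q' hq' hss
    refine hmin ⟨EE J n q', EE_upper J n q'⟩ ⟨n, q', hq', rfl⟩ ?_
    show U.1 ⊂ _
    rw [hU]; exact hss

namespace Dat
variable {J} (D : Dat J)

/-- `h` in level `n` -/
noncomputable def hn {n : ℕ} (hn : D.n0 ≤ n) : AA K c n := rn (Fin.castLE hn) D.h

abbrev E : Set (Fin c →₀ ℕ) := EE J D.n0 D.q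

lemma hn_succ {n : ℕ} (hn : D.n0 ≤ n) :
    rn Fin.castSucc (D.hn hn) = D.hn (hn.trans (Nat.le_succ n)) := by
  unfold Dat.hn; rw [rn_comp]; rfl

lemma lead_up (hchn : IsChn J) {n : ℕ} (hn : D.n0 ≤ n) {β} (hβ : β ∈ D.E) :
    ∃ f, psi D.n0 f ∈ J (D.n0 + 1) ∧
      coeff β (map (rn (K := K) (c := c) (Fin.castLE hn)).toRingHom f) = D.hn hn ∧
      (∀ γ, ky c β < ky c γ → coeff γ (map (rn (K := K) (c := c) (Fin.castLE hn)).toRingHom f) = 0) ∧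
      psi n (map (rn (K := K) (c := c) (Fin.castLE hn)).toRingHom f) ∈ J (n + 1) := by
  obtain ⟨f, h1, h2, h3⟩ := D.hE β hβ
  refine ⟨f, h1, ?_, ?_, ?_⟩
  · rw [coeff_map, h2]; rfl
  · intro γ hγ; rw [coeff_map, h3 γ hγ, map_zero]
  · rw [psi_map]; exact hchn _ _ _ (up_inj _ (Fin.castLE_injective hn)) _ h1

lemma one_col (hchn : IsChn J) (hrad : ∀ n, (J n).IsRadical) {n : ℕ} (hn : D.n0 ≤ n)
    (f : MvPolynomial (Fin c) (AA K c n)) (hf : ∀ β ∈ D.E, coeff β f = 0)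
    (hJ : psi n f ∈ J (n + 1)) (β : Fin c →₀ ℕ) : D.hn hn * coeff β f ∈ J n := by
  classical
  by_contra hbad
  let T := f.support.filter fun β => D.hn hn * coeff β f ∉ J n
  have hmemT : ∀ β, D.hn hn * coeff β f ∉ J n → β ∈ T := by
    intro β hβ
    refine Finset.mem_filter.2 ⟨mem_support_iff.2 fun h0 => hβ ?_, hβ⟩
    rw [h0, mul_zero]; exact zero_mem _
  obtain ⟨β, hβT, hmaxβ⟩ := T.exists_max_image (ky c) ⟨β, hmemT β hbad⟩
  obtain ⟨hβs, hβJ⟩ := Finset.mem_filter.1 hβT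
  have hgood : ∀ γ, ky c β < ky c γ → D.hn hn * coeff γ f ∈ J n := by
    intro γ hγ
    by_contra h
    exact absurd (hmaxβ γ (hmemT γ h)) (not_le.2 hγ)
  have h1 : ∃ q' ∈ (J n).minimalPrimes, D.hn hn * coeff β f ∉ q' := by
    by_contra h
    push Not at h
    apply hβJ
    rw [← (hrad n).radical, ← Ideal.sInf_minimalPrimes, Ideal.mem_sInf]
    exact fun {q'} hq' => h q' hq'
  obtain ⟨q', hq', hnq⟩ := h1
  have hhq : D.hn hn ∉ q' := fun h => hnq (Ideal.mul_mem_right _ _ h)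
  refine D.hmax n q' hq' ⟨fun γ hγ => ?_, fun hsub => ?_⟩
  · obtain ⟨g, _, h2, h3, h4⟩ := D.lead_up hchn hn hγ
    exact ⟨_, h4, by rw [h2]; exact hhq, h3⟩
  · have hβE : β ∈ D.E := by
      apply hsub
      let r := ∑ γ ∈ f.support.filter (fun γ => ky c β < ky c γ),
        monomial γ (D.hn hn * coeff γ f)
      have hr : ∀ δ, coeff δ r = if ky c β < ky c δ then D.hn hn * coeff δ f else 0 := by
        intro δ
        simp only [r, coeff_sum, coeff_monomial]
        rw [Finset.sum_ite_eq']
        simp only [Finset.mem_filter, mem_support_iff]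
        by_cases hlt : ky c β < ky c δ
        · by_cases h0 : coeff δ f = 0
          · simp [h0]
          · simp [h0, hlt]
        · simp [hlt]
      refine ⟨C (D.hn hn) * f - r, ?_, ?_, ?_⟩
      · rw [map_sub, map_mul]
        refine sub_mem (Ideal.mul_mem_left _ _ hJ) ?_
        rw [map_sum]
        refine sum_mem fun γ hγ => ?_
        rw [← mul_one (D.hn hn * coeff γ f), ← C_mul_monomial, map_mul, psi_C]
        exact Ideal.mul_mem_right _ _ (hchn _ _ _ (Fin.castSucc_injective n) _
          (hgood γ (Finset.mem_filter.1 hγ).2))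
      · rw [coeff_sub, coeff_C_mul, hr, if_neg (lt_irrefl _), sub_zero]; exact hnq
      · intro γ hγ
        rw [coeff_sub, coeff_C_mul, hr, if_pos hγ, sub_self]
    exact mem_support_iff.1 hβs (hf β hβE)

/-- relations of one column over the base -/
noncomputable def Rel : Ideal (MvPolynomial (Fin c) (AA K c D.n0)) := Ideal.comap (psi D.n0) (J (D.n0 + 1))

noncomputable def FF {n : ℕ} (hn : D.n0 ≤ n) : Ideal (MvPolynomial (Fin c) (AA K c n)) :=
  Ideal.map (map (rn (K := K) (c := c) (Fin.castLE hn)).toRingHom) D.Rel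

lemma FF_le (hchn : IsChn J) {n : ℕ} (hn : D.n0 ≤ n) (f) (hf : f ∈ D.FF hn) :
    psi n f ∈ J (n + 1) := by
  have : D.FF hn ≤ Ideal.comap (psi n) (J (n + 1)) := by
    refine Ideal.map_le_iff_le_comap.2 fun g hg => ?_
    rw [Ideal.mem_comap, Ideal.mem_comap, psi_map]
    exact hchn _ _ _ (up_inj _ (Fin.castLE_injective hn)) _ hg
  exact this hf

lemma division (hchn : IsChn J) {n : ℕ} (hn : D.n0 ≤ n) (x : (MonomialOrder.lex (σ := Fin c)).syn) :
    ∀ g : MvPolynomial (Fin c) (AA K c n), (∀ β, x < ky c β → coeff β g = 0) →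
    ∃ k r, (∀ β ∈ D.E, coeff β r = 0) ∧ C (D.hn hn) ^ k * g - r ∈ D.FF hn := by
  classical
  induction x using WellFoundedLT.induction with
  | ind x ih =>
  intro g hg
  -- IH for polynomials all of whose exponents are `< x`
  have ih' : ∀ g : MvPolynomial (Fin c) (AA K c n), (∀ β, x ≤ ky c β → coeff β g = 0) →
      ∃ k r, (∀ β ∈ D.E, coeff β r = 0) ∧ C (D.hn hn) ^ k * g - r ∈ D.FF hn := by
    intro g hg
    by_cases h0 : g = 0
    · exact ⟨0, 0, by simp, by simp [h0]⟩
    · have hne : g.support.Nonempty := by rwa [MvPolynomial.support_nonempty]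
      obtain ⟨e, he, hmax⟩ := g.support.exists_max_image (ky c) hne
      refine ih (ky c e) ?_ g ?_
      · by_contra hle
        exact mem_support_iff.1 he (hg e (not_lt.1 hle))
      · intro β hβ
        by_contra h
        exact absurd (hmax β (mem_support_iff.2 h)) (not_le.2 hβ)
  obtain ⟨α, rfl⟩ := (ky c).surjective x
  by_cases hα : α ∈ D.E
  · obtain ⟨f, h1, h2, h3, _⟩ := D.lead_up hchn hn hα
    set f' := map (rn (K := K) (c := c) (Fin.castLE hn)).toRingHom f
    have hf' : f' ∈ D.FF hn := Ideal.mem_map_of_mem _ h1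
    obtain ⟨k, r, hr, hk⟩ := ih' (C (D.hn hn) * g - C (coeff α g) * f') (by
      intro β hβ
      rw [coeff_sub, coeff_C_mul, coeff_C_mul]
      rcases hβ.lt_or_eq with h | h
      · rw [hg β h, h3 β h]; simp
      · rw [← (ky c).injective h, h2]; ring)
    refine ⟨k + 1, r, hr, ?_⟩
    have : C (D.hn hn) ^ (k + 1) * g - r =
      (C (D.hn hn) ^ k * (C (D.hn hn) * g - C (coeff α g) * f') - r) +
        (C (D.hn hn) ^ k * C (coeff α g)) * f' := by ring
    rw [this]
    exact add_mem hk (Ideal.mul_mem_left _ _ hf')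
  · obtain ⟨k, r, hr, hk⟩ := ih' (g - monomial α (coeff α g)) (by
      intro β hβ
      rw [coeff_sub, coeff_monomial]
      rcases hβ.lt_or_eq with h | h
      · rw [hg β h, if_neg]
        · simp
        · rintro rfl; exact lt_irrefl _ h
      · rw [← (ky c).injective h]; simp)
    refine ⟨k, r + C (D.hn hn) ^ k * monomial α (coeff α g), ?_, ?_⟩
    · intro β hβ
      rw [coeff_add, hr β hβ, ← C_pow, coeff_C_mul, coeff_monomial, if_neg, mul_zero, add_zero]
      rintro rfl; exact hα hβ
    · have : C (D.hn hn) ^ k * g - (r + C (D.hn hn) ^ k * monomial α (coeff α g)) =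
        C (D.hn hn) ^ k * (g - monomial α (coeff α g)) - r := by ring
      rw [this]; exact hk

lemma division' (hchn : IsChn J) {n : ℕ} (hn : D.n0 ≤ n) (g : MvPolynomial (Fin c) (AA K c n)) :
    ∃ k r, (∀ β ∈ D.E, coeff β r = 0) ∧ C (D.hn hn) ^ k * g - r ∈ D.FF hn := by
  by_cases h0 : g = 0
  · exact ⟨0, 0, by simp, by simp [h0]⟩
  · have hne : g.support.Nonempty := by rwa [MvPolynomial.support_nonempty]
    obtain ⟨e, he, hmax⟩ := g.support.exists_max_image (ky c) hne
    refine D.division hchn hn (ky c e) g ?_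
    intro β hβ
    by_contra h
    exact absurd (hmax β (mem_support_iff.2 h)) (not_le.2 hβ)

lemma psi_mem_of_coeff (hchn : IsChn J) {n : ℕ} (f : MvPolynomial (Fin c) (AA K c n))
    (hf : ∀ β, coeff β f ∈ J n) : psi n f ∈ J (n + 1) := by
  rw [f.as_sum, map_sum]
  refine sum_mem fun γ _ => ?_
  rw [← mul_one (coeff γ f), ← C_mul_monomial, map_mul, psi_C]
  exact Ideal.mul_mem_right _ _ (hchn _ _ _ (Fin.castSucc_injective n) _ (hf γ))

lemma castLE_refl_rn {n : ℕ} (h : n ≤ n) (g : AA K c n) : rn (Fin.castLE h) g = g := by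
  have : Fin.castLE h = id := by funext j; rfl
  rw [this, rn_id]

lemma nzd (hchn : IsChn J) (hrad : ∀ n, (J n).IsRadical) (s : AA K c D.n0) (hs : s ∉ D.q)
    {n : ℕ} (hn : D.n0 ≤ n) : ∀ g : AA K c n, rn (Fin.castLE hn) s * g ∈ J n →
      D.hn hn * g ∈ J n := by
  have hqp : D.q.IsPrime := D.hq.1.1
  induction n, hn using Nat.le_induction with
  | base =>
    intro g hg
    rw [castLE_refl_rn] at hg
    unfold Dat.hn
    rw [castLE_refl_rn]
    exact D.hJ g ((hqp.mem_or_mem (D.hq.1.2 hg)).resolve_left hs)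
  | succ n hn ih =>
    intro g hg
    obtain ⟨G, rfl⟩ := psi_surj n g
    obtain ⟨k, r, hr, hk⟩ := D.division' hchn hn G
    have hk' := D.FF_le hchn hn _ hk
    rw [map_sub, map_mul, map_pow, psi_C, D.hn_succ] at hk'
    set H := D.hn (hn.trans (Nat.le_succ n)) with hH
    have hs' : rn (Fin.castLE (hn.trans (Nat.le_succ n))) s = rn Fin.castSucc (rn (Fin.castLE hn) s) := by
      rw [rn_comp]; rfl
    set s1 := rn (Fin.castLE hn) s
    have h1 : psi n (C s1 * r) ∈ J (n + 1) := by
      rw [map_mul, psi_C, ← hs']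
      have := sub_mem (Ideal.mul_mem_left _ (H ^ k) hg)
        (Ideal.mul_mem_left _ (rn (Fin.castLE (hn.trans (Nat.le_succ n))) s) hk')
      convert this using 1
      ring
    have h2 : ∀ β, D.hn hn * (D.hn hn * coeff β r) ∈ J n := by
      intro β
      apply ih
      have := D.one_col hchn hrad hn _ (fun β hβ => by rw [coeff_C_mul, hr β hβ, mul_zero]) h1 β
      rw [coeff_C_mul] at this
      convert this using 1
      ring
    have h3 : psi n (C (D.hn hn) * (C (D.hn hn) * r)) ∈ J (n + 1) :=
      psi_mem_of_coeff hchn _ fun β => by rw [coeff_C_mul, coeff_C_mul]; exact h2 β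
    rw [map_mul, map_mul, psi_C, D.hn_succ, ← hH] at h3
    apply hrad (n + 1)
    refine ⟨k + 2, ?_⟩
    have h4 := add_mem h3 (Ideal.mul_mem_left _ (H * H) hk')
    have h5 := Ideal.mul_mem_left _ (psi n G ^ (k + 1)) h4
    convert h5 using 1
    ring

lemma comap_eq [IsNoetherianRing K] (hchn : IsChn J) (hrad : ∀ n, (J n).IsRadical) {n : ℕ}
    (hn : D.n0 ≤ n) (P : Ideal (AA K c n)) (hP : P ∈ (J n).minimalPrimes) (hh : D.hn hn ∉ P) :
    Ideal.comap (rn (K := K) (c := c) (Fin.castLE hn)) P = D.q := by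
  have hPp : P.IsPrime := hP.1.1
  have hle : Ideal.comap (rn (K := K) (c := c) (Fin.castLE hn)) P ≤ D.q := by
    intro s hs
    by_contra hsq
    obtain ⟨b, hb, hbJ⟩ := exists_cofactor _ _ (hrad n) hP
    have h1 := hbJ _ hs
    rw [mul_comm] at h1
    have h2 := hP.1.2 (D.nzd hchn hrad s hsq hn b h1)
    exact (hPp.mem_or_mem h2).elim hh hb
  refine le_antisymm hle (D.hq.2 ⟨hPp.comap _, fun g hg => ?_⟩ hle)
  exact hP.1.2 (hchn _ _ _ (Fin.castLE_injective hn) g hg)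

/-- vanishing on extensions of the generic point -/
lemma van (hchn : IsChn J) (hrad : ∀ n, (J n).IsRadical) {F : Type} [Field F] [Algebra K F]
    (u : Fin D.n0 → Fin c → F) (hu : ∀ g, evw u g = 0 ↔ g ∈ D.q)
    {n : ℕ} (hn : D.n0 ≤ n) : ∀ (w : Fin n → Fin c → F), (∀ b, w (Fin.castLE hn b) = u b) →
      (∀ t : Fin n, D.n0 ≤ t.1 → ∀ f ∈ D.Rel,
        eval₂ (evw (K := K) u).toRingHom (w t) f = 0) →
      ∀ g ∈ J n, evw w g = 0 := by
  induction n, hn using Nat.le_induction with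
  | base =>
    intro w hw _ g hg
    have : w = u := funext fun b => hw b
    rw [this, hu]
    exact D.hq.1.2 hg
  | succ n hn ih =>
    intro w hw hY g hg
    obtain ⟨G, rfl⟩ := psi_surj n g
    obtain ⟨k, r, hr, hk⟩ := D.division' hchn hn G
    have hk' := D.FF_le hchn hn _ hk
    rw [map_sub, map_mul, map_pow, psi_C] at hk'
    have h1 : psi n r ∈ J (n + 1) := by
      have := sub_mem (Ideal.mul_mem_left _ (rn Fin.castSucc (D.hn hn) ^ k) hg) hk'
      convert this using 1
      ring
    have h2 := D.one_col hchn hrad hn r hr h1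
    have hw' : ∀ b, (w ∘ Fin.castSucc) (Fin.castLE hn b) = u b := fun b => hw b
    have ih2 := ih (w ∘ Fin.castSucc) hw' (fun t ht => hY t.castSucc ht)
    have hH : evw (K := K) (w ∘ Fin.castSucc) (D.hn hn) ≠ 0 := by
      unfold Dat.hn
      rw [evw_rn]
      have : (w ∘ Fin.castSucc) ∘ Fin.castLE hn = u := funext hw'
      rw [this]
      exact fun h => D.hh ((hu _).1 h)
    have h3 : ∀ β, evw (K := K) (w ∘ Fin.castSucc) (coeff β r) = 0 := by
      intro β
      have := ih2 _ (h2 β)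
      rw [map_mul] at this
      exact (mul_eq_zero.1 this).resolve_left hH
    -- evaluation of psi
    have hev : ∀ f, evw (K := K) w (psi n f) =
        eval₂ (evw (K := K) (w ∘ Fin.castSucc)).toRingHom (w (Fin.last n)) f := by
      intro f
      have := psi_nat (evw (K := K) w).toRingHom id f
      rw [rn_id] at this
      refine this.trans ?_
      congr 1
      · ext a
        · simp [evw, rn]
        · simp [evw, rn]
      · funext i
        simp [evw]
    have hr0 : evw (K := K) w (psi n r) = 0 := by
      rw [hev, eval₂_eq]
      refine Finset.sum_eq_zero fun β _ => ?_
      have : (evw (K := K) (w ∘ Fin.castSucc)).toRingHom (coeff β r) = 0 := h3 β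
      rw [this, zero_mul]
    have hF0 : evw (K := K) w (psi n (C (D.hn hn) ^ k * G - r)) = 0 := by
      have : D.FF hn ≤ RingHom.ker ((evw (K := K) w).toRingHom.comp (psi n)) := by
        refine Ideal.map_le_iff_le_comap.2 fun f hf => ?_
        rw [Ideal.mem_comap, RingHom.mem_ker]
        show evw (K := K) w (psi n _) = 0
        rw [hev, eval₂_map, ← hY (Fin.last n) hn f hf]
        congr 1
        refine RingHom.ext fun a => ?_
        show evw (w ∘ Fin.castSucc) (rn (Fin.castLE hn) a) = evw u a
        rw [evw_rn]
        congr 1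
        congr 1
        exact funext hw'
      exact this hk
    rw [map_sub, map_sub, hr0, sub_zero, map_mul, map_mul, map_pow, map_pow, psi_C, evw_rn] at hF0
    exact (mul_eq_zero.1 hF0).resolve_left (pow_ne_zero _ hH)

end Dat
end
end SWM

namespace SWM
open MvPolynomial

lemma exists_generic {K R : Type} [CommRing K] [CommRing R] [Algebra K R] (q : Ideal R)
    (hq : q.IsPrime) : ∃ (F : Type) (_ : Field F) (_ : IsAlgClosed F) (_ : Algebra K F)
      (φ : R →ₐ[K] F), (∀ x, φ x = 0 ↔ x ∈ q) ∧
      ∀ (Ω : Type) [Field Ω] [IsAlgClosed Ω] [Algebra K Ω] (χ : R →ₐ[K] Ω),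
        (∀ x, χ x = 0 ↔ x ∈ q) → ∃ σ : F →ₐ[K] Ω, σ.comp φ = χ := by
  let D := R ⧸ q
  let k := FractionRing D
  have hinj : Function.Injective (algebraMap D (AlgebraicClosure k)) := by
    rw [IsScalarTower.algebraMap_eq D k (AlgebraicClosure k)]
    exact (algebraMap k (AlgebraicClosure k)).injective.comp (IsFractionRing.injective D k)
  refine ⟨AlgebraicClosure k, inferInstance, inferInstance, inferInstance,
    (IsScalarTower.toAlgHom K D (AlgebraicClosure k)).comp (Ideal.Quotient.mkₐ K q), ?_, ?_⟩
  · intro x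
    show algebraMap D (AlgebraicClosure k) (Ideal.Quotient.mk q x) = 0 ↔ _
    rw [map_eq_zero_iff _ hinj, Ideal.Quotient.eq_zero_iff_mem]
  · intro Ω _ _ _ χ hχ
    let χ' : D →ₐ[K] Ω := Ideal.Quotient.liftₐ q χ fun a ha => (hχ a).2 ha
    have hχ' : Function.Injective χ' := by
      rw [injective_iff_map_eq_zero]
      intro a
      obtain ⟨a, rfl⟩ := Ideal.Quotient.mk_surjective a
      intro h
      rw [Ideal.Quotient.eq_zero_iff_mem, ← hχ]
      exact h
    let _ : Algebra D Ω := χ'.toRingHom.toAlgebra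
    have : IsScalarTower K D Ω := IsScalarTower.of_algebraMap_eq fun x => (χ'.commutes x).symm
    have : Module.IsTorsionFree D Ω := Module.isTorsionFree_iff_algebraMap_injective.2 hχ'
    have : Module.IsTorsionFree D (AlgebraicClosure k) :=
      Module.isTorsionFree_iff_algebraMap_injective.2 hinj
    have : Algebra.IsAlgebraic D (AlgebraicClosure k) :=
      (IsFractionRing.comap_isAlgebraic_iff (A := D) (K := k)).2 inferInstance
    let σ : AlgebraicClosure k →ₐ[D] Ω := IsAlgClosed.lift
    refine ⟨σ.restrictScalars K, ?_⟩
    ext x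
    show σ (algebraMap D (AlgebraicClosure k) (Ideal.Quotient.mk q x)) = χ x
    rw [σ.commutes]
    rfl

lemma exists_labels {c n0 : ℕ} {F : Type} [Field F] (u : Fin n0 → Fin c → F)
    (J1 : Ideal (MvPolynomial (Fin c) F)) :
    ∃ (k : ℕ) (Q : ℕ → Ideal (MvPolynomial (Fin c) F)), n0 ≤ k ∧ (∀ l, (Q l).IsPrime) ∧
      (∀ b : Fin n0, Q b = vanishingIdeal F {u b}) ∧
      (∀ l, n0 ≤ l → l < k → J1 ≤ Q l) ∧
      ∀ P : Ideal (MvPolynomial (Fin c) F), P.IsPrime → J1 ≤ P → ∃ l, n0 ≤ l ∧ l < k ∧ Q l ≤ P := by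
  classical
  let M := (Ideal.finite_minimalPrimes_of_isNoetherianRing _ J1).toFinset
  have hM : ∀ P, P ∈ M ↔ P ∈ J1.minimalPrimes := fun P => Set.Finite.mem_toFinset _
  let e := M.equivFin
  refine ⟨n0 + M.card, fun l => if h : l < n0 then vanishingIdeal F {u ⟨l, h⟩} else
    if h' : l - n0 < M.card then (e.symm ⟨l - n0, h'⟩).1 else ⊥, Nat.le_add_right _ _, ?_, ?_, ?_, ?_⟩
  · intro l
    dsimp only
    split_ifs with h h'
    · infer_instance
    · exact ((hM _).1 (e.symm ⟨l - n0, h'⟩).2).1.1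
    · exact Ideal.isPrime_bot
  · intro b
    dsimp only
    rw [dif_pos b.2]
  · intro l h1 h2
    dsimp only
    have h' : l - n0 < M.card := by omega
    rw [dif_neg (by omega), dif_pos h']
    exact ((hM _).1 (e.symm ⟨l - n0, h'⟩).2).1.2
  · intro P hP hle
    obtain ⟨q, hq, hqP⟩ := Ideal.exists_minimalPrimes_le hle
    let i := e ⟨q, (hM q).2 hq⟩
    refine ⟨n0 + i.1, by omega, by omega, ?_⟩
    dsimp only
    have h' : n0 + i.1 - n0 < M.card := by rw [Nat.add_sub_cancel_left]; exact i.2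
    rw [dif_neg (by omega), dif_pos h']
    have : (⟨n0 + i.1 - n0, h'⟩ : Fin M.card) = i := Fin.ext (Nat.add_sub_cancel_left _ _)
    rw [this, Equiv.symm_apply_apply]
    exact hqP

theorem step {K : Type} [CommRing K] [IsNoetherianRing K] {c : ℕ} (J : ∀ n, Ideal (AA K c n))
    (hchn : IsChn J) (hrad : ∀ n, (J n).IsRadical) (hne : ∃ n, J n ≠ ⊤) : StepStd J := by
  classical
  obtain ⟨D⟩ := exists_dat J hrad hne
  obtain ⟨F, _, _, _, φ, hφ, hlift⟩ := exists_generic (K := K) D.q D.hq.1.1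
  let u : Fin D.n0 → Fin c → F := fun b i => φ (X (i, b))
  have hφu : φ = evw u := by
    apply MvPolynomial.algHom_ext
    intro p
    simp [evw, u]
  have hu : ∀ g, evw (K := K) u g = 0 ↔ g ∈ D.q := by rw [← hφu]; exact hφ
  let J1 : Ideal (MvPolynomial (Fin c) F) := Ideal.map (map (evw (K := K) u).toRingHom) D.Rel
  obtain ⟨k, Q, hk, hQp, hQb, hQl, hQm⟩ := exists_labels u J1
  have hvz : ∀ l, vanishingIdeal F (zeroLocus F (Q l)) = Q l := fun l => by
    have := hQp l
    exact IsPrime.vanishingIdeal_zeroLocus (Q l)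
  have hnz : ∀ l f, (∃ x ∈ zeroLocus F (Q l), eval x f ≠ 0) ↔ f ∉ Q l := by
    intro l f
    rw [← hvz l, mem_vanishingIdeal_iff]
    push Not
    rw [hvz l]
    simp [MvPolynomial.aeval_eq_eval]
  let p : Patch K c :=
    { F := F
      V := fun l => zeroLocus F (Q l)
      ne := fun l => by
        by_contra h
        rw [Set.not_nonempty_iff_eq_empty] at h
        have h1 := hvz l
        rw [h, vanishingIdeal_empty] at h1
        exact (hQp l).ne_top h1.symm
      irr := fun l f g hf hg => by
        rw [hnz] at hf hg
        have : f * g ∉ Q l := fun h => ((hQp l).mem_or_mem h).elim hf hg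
        obtain ⟨x, hx, h⟩ := (hnz l _).2 this
        rw [map_mul] at h
        exact ⟨x, hx, left_ne_zero_of_mul h, right_ne_zero_of_mul h⟩
      n0 := D.n0
      k := k }
  have hzb : ∀ b : Fin D.n0, ∀ x ∈ zeroLocus F (Q b), x = u b := by
    intro b x hx
    funext i
    have h1 : (X i - C (u b i) : MvPolynomial (Fin c) F) ∈ Q b := by
      rw [hQb, mem_vanishingIdeal_singleton_iff]; simp
    have := mem_zeroLocus_iff.1 hx _ h1
    simpa [sub_eq_zero] using this
  refine ⟨p, D.h, fun h => D.hh (D.hq.1.2 h), ?_, ?_⟩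
  · intro n hn τ hτ hstd g hg
    rw [Patch.mem_I]
    intro w hw
    refine D.van hchn hrad u hu hn w ?_ ?_ g hg
    · intro b
      have := hw (Fin.castLE hn b)
      rw [hstd b] at this
      exact hzb b _ this
    · intro t ht f hf
      have h1 : D.n0 ≤ τ t := by
        by_contra hlt
        push Not at hlt
        obtain ⟨j, _, hj⟩ := hτ.2 (τ t) hlt
        have h2 := hj t rfl
        have h3 := hj (Fin.castLE hn ⟨τ t, hlt⟩) (hstd _)
        rw [← h3] at h2
        have := congrArg Fin.val h2
        simp only [Fin.val_castLE] at this
        omega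
      have h2 : map (evw (K := K) u).toRingHom f ∈ Q (τ t) :=
        hQl _ h1 (hτ.1 t) (Ideal.mem_map_of_mem _ hf)
      have h3 := mem_zeroLocus_iff.1 (hw t) _ h2
      rw [MvPolynomial.aeval_eq_eval] at h3
      rw [← h3]
      exact (eval_map _ _ _).symm
  · intro n hn P hP hle hhP
    change D.n0 ≤ n at hn
    obtain ⟨P', hP', hPP⟩ := Ideal.exists_minimalPrimes_le hle
    have hh' : D.hn hn ∉ P' := fun h => hhP (hPP h)
    have hcm := D.comap_eq hchn hrad hn P' hP' hh'
    obtain ⟨Ω, _, _, _, φ', hφ', -⟩ := exists_generic (K := K) P' hP'.1.1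
    obtain ⟨σ, hσ⟩ := hlift Ω (φ'.comp (rn (Fin.castLE hn))) (fun x => by
      rw [← hcm, Ideal.mem_comap, ← hφ']; rfl)
    let v : Fin n → Fin c → Ω := fun t i => φ' (X (i, t))
    have hvb : ∀ b, v (Fin.castLE hn b) = fun i => σ (u b i) := by
      intro b
      funext i
      have := DFunLike.congr_fun hσ (X (i, b))
      simp only [AlgHom.comp_apply, rn_X] at this
      exact this.symm
    let θ : Fin n → MvPolynomial (Fin c) F →+* Ω := fun t => eval₂Hom σ.toRingHom (v t)
    -- choose labels
    have hlab : ∀ t : Fin n, ∃ l, l < k ∧ (∀ ht : t.1 < D.n0, l = t.1) ∧ (D.n0 ≤ t.1 → D.n0 ≤ l) ∧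
        Q l ≤ RingHom.ker (θ t) := by
      intro t
      by_cases ht : t.1 < D.n0
      · refine ⟨t.1, by omega, fun _ => rfl, fun h => by omega, ?_⟩
        have := hQb ⟨t.1, ht⟩
        simp only at this
        rw [this]
        intro f hf
        rw [mem_vanishingIdeal_singleton_iff] at hf
        rw [RingHom.mem_ker]
        have hvt : v t = fun i => σ (u ⟨t.1, ht⟩ i) := hvb ⟨t.1, ht⟩
        show eval₂ σ.toRingHom (v t) f = 0
        rw [hvt]
        rw [MvPolynomial.aeval_eq_eval] at hf
        have h2 : σ.toRingHom (eval (u ⟨t.1, ht⟩) f) = 0 := by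
          have : eval (u ⟨t.1, ht⟩) f = 0 := hf
          rw [this, map_zero]
        rw [← h2]
        exact (eval₂_comp_left σ.toRingHom (RingHom.id F) _ f).symm
      · push Not at ht
        have hJ1 : J1 ≤ RingHom.ker (θ t) := by
          refine Ideal.map_le_iff_le_comap.2 fun f hf => ?_
          rw [Ideal.mem_comap, RingHom.mem_ker]
          show eval₂ σ.toRingHom (v t) (map _ f) = 0
          rw [eval₂_map]
          let ι : Fin (D.n0 + 1) → Fin n :=
            Fin.snoc (α := fun _ => Fin n) (Fin.castLE hn) t
          have hι1 : ∀ b : Fin D.n0, ι b.castSucc = Fin.castLE hn b := fun b => by simp [ι]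
          have hι2 : ι (Fin.last _) = t := by simp [ι]
          have hιi : Function.Injective ι := by
            intro a b
            induction a using Fin.lastCases with
            | last =>
              induction b using Fin.lastCases with
              | last => simp
              | cast b =>
                rw [hι1, hι2]; intro h
                have := congrArg Fin.val h
                simp only [Fin.val_castLE] at this
                omega
            | cast a =>
              induction b using Fin.lastCases with
              | last =>
                rw [hι1, hι2]; intro h
                have := congrArg Fin.val h
                simp only [Fin.val_castLE] at this
                omega
              | cast b =>
                rw [hι1, hι1]; intro h
                rw [Fin.castLE_injective hn h]
          have h1 : φ' (rn ι (psi D.n0 f)) = 0 :=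
            (hφ' _).2 (hP'.1.2 (hchn _ _ ι hιi _ hf))
          have h2 := psi_nat φ'.toRingHom ι f
          have h3 : φ'.toRingHom (rn ι (psi D.n0 f)) = 0 := h1
          rw [h3] at h2
          rw [h2]
          congr 1
          · refine RingHom.ext fun a => ?_
            have := DFunLike.congr_fun hσ a
            rw [hφu] at this
            refine this.trans ?_
            show φ' (rn _ a) = φ' (rn _ a)
            congr 2
            exact congrArg _ (funext fun b => (hι1 b).symm)
          · funext i
            rw [hι2]; rfl
        obtain ⟨l, hl1, hl2, hl3⟩ := hQm _ (RingHom.ker_isPrime (θ t)) hJ1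
        exact ⟨l, hl2, fun h => by omega, fun _ => hl1, hl3⟩
    choose τ hτ1 hτ2 hτ3 hτ4 using hlab
    refine ⟨τ, ⟨hτ1, fun b hb => ⟨Fin.castLE hn ⟨b, hb⟩, hτ2 _ hb, fun j hj => ?_⟩⟩, fun g hg => hPP ?_⟩
    · change b < D.n0 at hb
      by_cases hj' : j.1 < D.n0
      · have := hτ2 j hj'
        apply Fin.ext
        simp only [Fin.val_castLE]
        omega
      · have := hτ3 j (by omega)
        omega
    · rw [Patch.mem_I] at hg
      let G : MvPolynomial (Fin c × Fin n) F := map (algebraMap K F) g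
      let QQ : Ideal (MvPolynomial (Fin c × Fin n) F) :=
        ⨆ j : Fin n, Ideal.map (rename (fun i : Fin c => (i, j))) (Q (τ j))
      have hG : G ∈ QQ.radical := by
        rw [← vanishingIdeal_zeroLocus_eq_radical (K := F), mem_vanishingIdeal_iff]
        intro x hx
        have h1 := hg (fun j i => x (i, j)) (by
          intro j
          show _ ∈ zeroLocus F (Q (τ j))
          rw [mem_zeroLocus_iff]
          intro f hf
          have h2 : rename (fun i : Fin c => (i, j)) f ∈ QQ :=
            (le_iSup (fun j : Fin n => Ideal.map (rename (fun i : Fin c => (i, j))) (Q (τ j))) j)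
              (Ideal.mem_map_of_mem _ hf)
          have h3 := mem_zeroLocus_iff.1 hx _ h2
          rw [aeval_rename] at h3
          exact h3)
        rw [← h1]
        show aeval x (map (algebraMap K F) g) = aeval _ g
        rw [aeval_map_algebraMap]
      let Θ : MvPolynomial (Fin c × Fin n) F →+* Ω := eval₂Hom σ.toRingHom fun q => v q.2 q.1
      have hΘ : QQ ≤ RingHom.ker Θ := by
        refine iSup_le fun j => Ideal.map_le_iff_le_comap.2 fun f hf => ?_
        rw [Ideal.mem_comap, RingHom.mem_ker]
        show eval₂ σ.toRingHom _ (rename _ f) = 0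
        rw [eval₂_rename]
        exact hτ4 j hf
      have h2 : Θ G = 0 := by
        have hp : (RingHom.ker Θ).IsPrime := RingHom.ker_isPrime Θ
        exact (hp.radical_le_iff.2 hΘ) hG
      rw [← hφ']
      have h3 : Θ G = eval₂ (σ.toRingHom.comp (algebraMap K F)) (fun q => v q.2 q.1) g := by
        show eval₂ _ _ (map _ g) = _
        rw [eval₂_map]
      have h4 : φ' = aeval fun q : Fin c × Fin n => v q.2 q.1 := by
        apply MvPolynomial.algHom_ext
        intro q
        simp [v]
      rw [h4, ← h2, h3, aeval_def]
      congr 1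
      exact RingHom.ext fun x => (σ.commutes x).symm

theorem covered {K : Type} [CommRing K] [IsNoetherianRing K] {c : ℕ}
    (I : ∀ n, Ideal (AA K c n)) (hI : IsChn I) : Covered I :=
  covered_of_step (fun J h1 h2 h3 => step J h1 h2 h3) I hI

end SWM

namespace SWM
open MvPolynomial

section
variable {K : Type} [CommRing K] {c : ℕ}

lemma map_rn {n : ℕ} (π : Equiv.Perm (Fin n)) (P : Ideal (AA K c n)) :
    Ideal.map (rn (K := K) (c := c) π) P = Ideal.comap (rn (K := K) (c := c) π.symm) P := by
  have e1 : (π ∘ π.symm : Fin n → Fin n) = id := by funext j; simp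
  have e2 : (π.symm ∘ π : Fin n → Fin n) = id := by funext j; simp
  apply le_antisymm
  · refine Ideal.map_le_iff_le_comap.2 fun g hg => ?_
    rw [Ideal.mem_comap, Ideal.mem_comap, rn_comp, e2, rn_id]; exact hg
  · intro g hg
    rw [Ideal.mem_comap] at hg
    have := Ideal.mem_map_of_mem (rn (K := K) (c := c) π) hg
    rwa [rn_comp, e1, rn_id] at this

lemma card_quot_congr {X : Type} (p q : X → Prop) (r : X → X → Prop) (h : ∀ x, p x ↔ q x) :
    Nat.card (Quot (fun a b : {x // p x} => r a.1 b.1)) =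
      Nat.card (Quot (fun a b : {x // q x} => r a.1 b.1)) := by
  have : p = q := funext fun x => propext (h x)
  subst this; rfl

lemma cntv_eq_zero {n N : ℕ} (τ : Fin n → Fin N) (l : Fin N) :
    cntv τ l = 0 ↔ ∀ j, τ j ≠ l := by
  unfold cntv
  rw [Fintype.card_eq_zero_iff, isEmpty_subtype]

lemma cntv_eq_one {n N : ℕ} (τ : Fin n → Fin N) (l : Fin N) :
    cntv τ l = 1 ↔ ∃! j, τ j = l := by
  unfold cntv
  rw [Fintype.card_eq_one_iff]
  constructor
  · rintro ⟨⟨j, hj⟩, h⟩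
    exact ⟨j, hj, fun i hi => congrArg Subtype.val (h ⟨i, hi⟩)⟩
  · rintro ⟨j, hj, h⟩
    exact ⟨⟨j, hj⟩, fun i => Subtype.ext (h i.1 i.2)⟩

lemma semilinear_E (N k n0 : ℕ) : IsSemilinearSet {x : Fin N → ℕ |
    (∀ l : Fin N, k ≤ l.1 → x l = 0) ∧ ∀ l : Fin N, l.1 < n0 → x l = 1} := by
  have h1 := semilinear_upper {x : Fin N → ℕ | ∀ l : Fin N, l.1 < n0 → 1 ≤ x l}
    (fun x y hxy hx l hl => (hx l hl).trans (hxy l))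
  have h2 := semilinear_lower {x : Fin N → ℕ | (∀ l : Fin N, k ≤ l.1 → x l ≤ 0) ∧
    ∀ l : Fin N, l.1 < n0 → x l ≤ 1}
    (fun x y hxy hx => ⟨fun l hl => (hxy l).trans (hx.1 l hl), fun l hl => (hxy l).trans (hx.2 l hl)⟩)
  convert h1.inter h2 using 1
  ext x
  simp only [Set.mem_inter_iff, Set.mem_ofPred_eq]
  constructor
  · rintro ⟨h1, h2⟩
    exact ⟨fun l hl => (h2 l hl).ge, fun l hl => (h1 l hl).le, fun l hl => (h2 l hl).le⟩
  · rintro ⟨h1, h2, h3⟩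
    exact ⟨fun l hl => Nat.le_zero.1 (h2 l hl), fun l hl => le_antisymm (h3 l hl) (h1 l hl)⟩

theorem main [IsNoetherianRing K] (I : ∀ n, Ideal (AA K c n)) (hI : IsChn I) :
    EQP (fun n => (Nat.card (Quot (fun (P Q : {P : Ideal (AA K c n) // P ∈ (I n).minimalPrimes}) =>
        ∃ π : Equiv.Perm (Fin n), Ideal.map (rn (K := K) (c := c) π) P.1 = Q.1)) : ℚ)) := by
  obtain ⟨l, hl1, hl2⟩ := covered I hI
  obtain ⟨N, hN⟩ : ∃ N : ℕ, ∀ p ∈ l, p.k ≤ N ∧ p.n0 ≤ N := by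
    clear hl1 hl2
    induction l with
    | nil => exact ⟨0, by simp⟩
    | cons p l ih =>
      obtain ⟨N, hN⟩ := ih
      refine ⟨N + p.k + p.n0, fun q hq => ?_⟩
      rw [List.mem_cons] at hq
      rcases hq with rfl | hq
      · omega
      · have := hN q hq; omega
  let C : Fin l.length → ∀ n, (Fin n → Fin N) → Ideal (AA K c n) :=
    fun p n τ => (l.get p).I fun j => (τ j : ℕ)
  let E : Fin l.length → Set (Vk N) := fun p => {x | (∀ i : Fin N, (l.get p).k ≤ i.1 → x i = 0) ∧
    ∀ i : Fin N, i.1 < (l.get p).n0 → x i = 1}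
  have hadm : ∀ p n (τ : Fin n → Fin N), cntv τ ∈ E p ↔ (l.get p).Adm fun j => (τ j : ℕ) := by
    intro p n τ
    have hb := hN _ (l.get_mem p)
    simp only [E, Set.mem_ofPred_eq, Patch.Adm, cntv_eq_zero, cntv_eq_one]
    refine and_congr ⟨fun h j => ?_, fun h i hi j hj => ?_⟩ ⟨fun h b hbb => ?_, fun h i hi => ?_⟩
    · by_contra hlt
      exact h (τ j) (not_lt.1 hlt) j rfl
    · subst hj; exact absurd (h j) (not_lt.2 hi)
    · have := h ⟨b, by omega⟩ hbb
      simpa [Fin.ext_iff] using this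
    · have := h i.1 hi
      simpa [Fin.ext_iff] using this
  have hres : ResProp C := by
    intro p q m n ι hι τ σ hle f hf
    have h1 := ((l.get p).rn_mem_I ι hι (fun j => (τ j : ℕ)) f).2 hf
    exact ((l.get q).rn_mem_I ι hι (fun j => (σ j : ℕ)) f).1 (hle h1)
  have hmapC : ∀ p n (τ : Fin n → Fin N) (π : Equiv.Perm (Fin n)),
      Ideal.map (rn (K := K) (c := c) π) (C p n τ) = C p n (τ ∘ π.symm) := by
    intro p n τ π
    rw [map_rn]
    ext g
    rw [Ideal.mem_comap]
    exact (l.get p).rn_mem_I _ π.symm.injective _ g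
  have key := count_orbits C E hres (fun p => semilinear_E N _ _)
    (fun n P Q => ∃ π : Equiv.Perm (Fin n), Ideal.map (rn (K := K) (c := c) π) P = Q)
    (fun n => ⟨fun P => ⟨1, by
        rw [map_rn]; ext g; rw [Ideal.mem_comap]
        show rn id g ∈ P ↔ _
        rw [rn_id]⟩, by
        rintro P Q ⟨π, rfl⟩
        refine ⟨π.symm, ?_⟩
        rw [map_rn, map_rn]
        ext g
        rw [Ideal.mem_comap, Ideal.mem_comap, rn_comp]
        have e2 : (π.symm ∘ π.symm.symm : Fin n → Fin n) = id := by funext j; simp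
        rw [e2, rn_id], by
        rintro P Q R ⟨π, rfl⟩ ⟨ρ, rfl⟩
        refine ⟨ρ * π, ?_⟩
        rw [map_rn, map_rn, map_rn]
        ext g
        rw [Ideal.mem_comap, Ideal.mem_comap, Ideal.mem_comap, rn_comp]
        rfl⟩)
    (fun n p τ Q => by
      constructor
      · rintro ⟨π, rfl⟩
        exact ⟨π.symm, hmapC p n τ π⟩
      · rintro ⟨π, rfl⟩
        exact ⟨π.symm, hmapC p n τ π.symm⟩)
  refine key.congr 0 fun n _ => ?_
  have hcand : ∀ P ∈ Cand C E n, P.IsPrime ∧ I n ≤ P := by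
    rintro _ ⟨p, τ, hτ, rfl⟩
    exact ⟨Patch.I_prime _ _, hl1 n _ (l.get_mem p) _ ((hadm p n τ).1 hτ)⟩
  have hex : ∀ P : Ideal (AA K c n), P.IsPrime → I n ≤ P → ∃ P' ∈ Cand C E n, P' ≤ P := by
    intro P hP hle
    obtain ⟨p, hp, τ, hτ, hτP⟩ := hl2 n P hP hle
    obtain ⟨i, rfl⟩ := List.get_of_mem hp
    have hb := hN _ (l.get_mem i)
    refine ⟨_, ⟨i, fun j => ⟨τ j, (hτ.1 j).trans_le hb.1⟩, (hadm _ _ _).2 hτ, rfl⟩, hτP⟩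
  refine congrArg Nat.cast (card_quot_congr _ _
    (fun P Q => ∃ π : Equiv.Perm (Fin n), Ideal.map (rn (K := K) (c := c) π) P = Q) fun P => ?_)
  constructor
  · intro hP
    refine ⟨⟨(hcand P hP.1).1, (hcand P hP.1).2⟩, fun Q hQ hQP => ?_⟩
    obtain ⟨P', hP', hle⟩ := hex Q hQ.1 hQ.2
    exact (hP.2 hP' (hle.trans hQP)).trans hle
  · intro hP
    obtain ⟨P', hP', hle⟩ := hex P hP.1.1 hP.1.2
    have : P' = P := le_antisymm hle (hP.2 (hcand P' hP') hle)
    subst this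
    exact ⟨hP', fun Q hQ hQP => hP.2 (hcand Q hQ) hQP⟩

lemma isChn_of (I : ∀ n, Ideal (AA K c n))
    (hsym : ∀ (n : ℕ) (π : Equiv.Perm (Fin n)), Ideal.map (rn (K := K) (c := c) π) (I n) = I n)
    (hincl : ∀ n : ℕ, Ideal.map (rn (K := K) (c := c) (Fin.castSucc : Fin n → Fin (n + 1))) (I n)
      ≤ I (n + 1)) : IsChn I := by
  intro m n ι hι f hf
  have hmn : m ≤ n := by simpa using Fintype.card_le_of_injective _ hι
  have h1 : ∀ n (h : m ≤ n), rn (Fin.castLE h) f ∈ I n := by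
    intro n h
    induction n, h using Nat.le_induction with
    | base => rw [Dat.castLE_refl_rn]; exact hf
    | succ n h ih =>
      have := hincl n (Ideal.mem_map_of_mem _ ih)
      rw [rn_comp] at this
      exact this
  obtain ⟨π, hπ⟩ := exists_perm_ext (Fin.castLE hmn) ι (Fin.castLE_injective hmn) hι
  have := Ideal.mem_map_of_mem (rn (K := K) (c := c) π) (h1 n hmn)
  rwa [hsym, rn_comp, hπ] at this

end
end SWM

/-- The number of `Sym([n])`-orbits on the set of minimal primes of
`A_n = K[x_{i,j} : i ∈ [c], j ∈ [n]]` over the ideal `I n` of a symmetric wide-matrix ideal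
chain is a quasipolynomial in `n` for all `n ≫ 0`. -/
theorem components_of_symmetric_wide_matrix_varieties
    (K : Type) [CommRing K] [IsNoetherianRing K] (c : ℕ)
    (I : ∀ n : ℕ, Ideal (MvPolynomial (Fin c × Fin n) K))
    (hsym : ∀ (n : ℕ) (π : Equiv.Perm (Fin n)),
      Ideal.map (rename (Prod.map (id : Fin c → Fin c) π)) (I n) = I n)
    (hincl : ∀ n : ℕ,
      Ideal.map (rename (Prod.map (id : Fin c → Fin c) (Fin.castSucc : Fin n → Fin (n + 1))))
        (I n) ≤ I (n + 1)) :
    QuasiPolynomialCount (fun n =>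
      Nat.card (Quot (fun (P Q : {P : Ideal (MvPolynomial (Fin c × Fin n) K) //
          P ∈ (I n).minimalPrimes}) =>
        ∃ π : Equiv.Perm (Fin n),
          Ideal.map (rename (Prod.map (id : Fin c → Fin c) π)) P.1 = Q.1))) := by
  have hchn : SWM.IsChn I := SWM.isChn_of I hsym hincl
  exact (SWM.main I hchn).exists_zmod
end

section
/- Let K be a field, S ⊆ K a finite subset, and k ∈ ℕ. For n ∈ ℕ let M_n := {A ∈ K^{n×n} : every entry of A lies in S and rank(A) = k}, with Sym([n]) acting on M_n by simultaneous row and column permutations, (π·A)(i,j) = A(π⁻¹(i), π⁻¹(j)). Then the number of Sym([n])-orbits on M_n is a quasipolynomial in n for all n ≫ 0. -/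
open Polynomial in
def EQP (a : ℕ → ℚ) : Prop :=
  ∃ N : ℕ, 0 < N ∧ ∃ n₀ : ℕ, ∀ n, n₀ ≤ n → ∃ p : ℚ[X], ∀ q : ℕ, a (n + N * q) = p.eval (q : ℚ)

namespace EQP
open Polynomial

theorem add {a b : ℕ → ℚ} (ha : EQP a) (hb : EQP b) : EQP (fun n => a n + b n) := by
  obtain ⟨N, hN, n₀, ha⟩ := ha
  obtain ⟨M, hM, m₀, hb⟩ := hb
  refine ⟨N * M, Nat.mul_pos hN hM, max n₀ m₀, fun n hn => ?_⟩
  obtain ⟨p, hp⟩ := ha n (le_trans (le_max_left _ _) hn)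
  obtain ⟨r, hr⟩ := hb n (le_trans (le_max_right _ _) hn)
  refine ⟨p.comp (C (M : ℚ) * X) + r.comp (C (N : ℚ) * X), fun q => ?_⟩
  have h1 := hp (M * q)
  have h2 := hr (N * q)
  have e1 : n + N * M * q = n + N * (M * q) := by ring
  have e2 : n + N * M * q = n + M * (N * q) := by ring
  simp only [eval_add, eval_comp, eval_mul, eval_C, eval_X]
  push_cast at h1 h2
  rw [← h1, ← h2, ← e1, ← e2]

theorem const_mul {a : ℕ → ℚ} (c : ℚ) (ha : EQP a) : EQP (fun n => c * a n) := by
  obtain ⟨N, hN, n₀, ha⟩ := ha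
  refine ⟨N, hN, n₀, fun n hn => ?_⟩
  obtain ⟨p, hp⟩ := ha n hn
  exact ⟨C c * p, fun q => by simp [hp q]⟩

theorem eventually_zero {a : ℕ → ℚ} (n₀ : ℕ) (h : ∀ n, n₀ ≤ n → a n = 0) : EQP a :=
  ⟨1, one_pos, n₀, fun n hn => ⟨0, fun q => by simpa using h _ (by omega)⟩⟩

theorem sum {ι : Type*} (s : Finset ι) (a : ι → ℕ → ℚ) (h : ∀ i ∈ s, EQP (a i)) :
    EQP (fun n => ∑ i ∈ s, a i n) := by
  classical
  induction s using Finset.induction_on with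
  | empty => exact eventually_zero 0 (by simp)
  | insert i s hi ih =>
    simp only [Finset.sum_insert hi]
    exact (h i (by simp)).add (ih fun j hj => h j (by simp [hj]))

theorem poly_sum (p : ℚ[X]) :
    ∃ r : ℚ[X], ∀ q : ℕ, ∑ j ∈ Finset.range q, p.eval (j : ℚ) = r.eval (q : ℚ) := by
  induction p using Polynomial.induction_on' with
  | add p q hp hq =>
    obtain ⟨r, hr⟩ := hp
    obtain ⟨s, hs⟩ := hq
    exact ⟨r + s, fun q => by simp [Finset.sum_add_distrib, hr, hs]⟩
  | monomial d c =>
    refine ⟨C c * ∑ i ∈ Finset.range (d + 1),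
      C (_root_.bernoulli i * ((d + 1).choose i : ℚ) / (d + 1)) * X ^ (d + 1 - i), fun q => ?_⟩
    simp only [eval_monomial, ← Finset.mul_sum, sum_range_pow, eval_mul, eval_C, eval_finsetSum,
      eval_pow, eval_X]
    congr 1
    refine Finset.sum_congr rfl fun i _ => ?_
    ring

theorem step {g f : ℕ → ℚ} (w : ℕ) (hw : 0 < w) (hf : EQP f)
    (h : ∀ n, g (n + w) = g n + f n) : EQP g := by
  obtain ⟨N, hN, n₀, hf⟩ := hf
  have hk : ∀ n k, g (n + w * k) = g n + ∑ j ∈ Finset.range k, f (n + w * j) := by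
    intro n k
    induction k with
    | zero => simp
    | succ k ih => rw [Finset.sum_range_succ, ← add_assoc, ← ih, ← h]; congr 1; ring
  refine ⟨N * w, Nat.mul_pos hN hw, n₀, fun n hn => ?_⟩
  choose p hp using fun j : ℕ => hf (n + w * j) (by omega)
  have hstep : ∀ q : ℕ, g (n + N * w * (q + 1)) = g (n + N * w * q) +
      (∑ j ∈ Finset.range N, (p j).comp (C (w : ℚ) * X)).eval (q : ℚ) := by
    intro q
    have := hk (n + N * w * q) N
    rw [show n + N * w * q + w * N = n + N * w * (q + 1) by ring] at this
    rw [this, eval_finsetSum]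
    congr 1
    refine Finset.sum_congr rfl fun j _ => ?_
    have h1 := hp j (w * q)
    simp only [eval_comp, eval_mul, eval_C, eval_X]
    push_cast at h1
    rw [← h1]; congr 1; ring
  obtain ⟨r, hr⟩ := poly_sum (∑ j ∈ Finset.range N, (p j).comp (C (w : ℚ) * X))
  refine ⟨C (g n) + r, fun q => ?_⟩
  rw [eval_add, eval_C, ← hr]
  induction q with
  | zero => simp
  | succ q ih => rw [hstep, ih, Finset.sum_range_succ, add_assoc]

theorem toQuasi {a : ℕ → ℕ} (h : EQP (fun n => (a n : ℚ))) : QuasiPolynomialCount a := by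
  obtain ⟨N, hN, n₀, h⟩ := h
  have : NeZero N := ⟨hN.ne'⟩
  choose p hp using fun z : ZMod N => h (N * n₀ + z.val) (by nlinarith)
  let P : ZMod N → ℚ[X] := fun z =>
    (p z).comp (C ((N : ℚ)⁻¹) * (X - C ((N * n₀ + z.val : ℕ) : ℚ)))
  refine ⟨fun n => (P (n : ZMod N)).eval (n : ℚ), ⟨N, hN, P, fun n => rfl⟩, N * n₀ + N,
    fun n hn => ?_⟩
  have hv : ((n : ℤ) : ZMod N).val = n % N := by simp [ZMod.val_natCast]
  obtain ⟨q, hq⟩ : ∃ q, n = N * n₀ + n % N + N * q := by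
    refine ⟨n / N - n₀, ?_⟩
    have h1 := Nat.div_add_mod n N
    have h2 : n₀ ≤ n / N := (Nat.le_div_iff_mul_le hN).2 (by nlinarith)
    obtain ⟨t, ht⟩ := Nat.exists_eq_add_of_le h2
    rw [ht] at h1 ⊢
    rw [Nat.add_sub_cancel_left]
    nlinarith
  have h1 := hp ((n : ℤ) : ZMod N) q
  simp only [P, eval_comp, eval_mul, eval_C, eval_X, eval_sub]
  rw [hv] at h1 ⊢
  rw [← hq] at h1
  refine h1.trans ?_
  congr 1
  have hN' : (N : ℚ) ≠ 0 := by exact_mod_cast hN.ne'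
  have : (n : ℚ) = ((N * n₀ + n % N + N * q : ℕ) : ℚ) := by exact_mod_cast hq
  rw [eq_inv_mul_iff_mul_eq₀ hN']
  push_cast at this ⊢
  linarith

end EQP

abbrev WSol {ι : Type} [Fintype ι] (w : ι → ℕ) (n : ℕ) : Type :=
  {d : ι → ℕ // (∀ i, 0 < d i) ∧ ∑ i, w i * d i = n}

theorem WSol.finite {ι : Type} [Fintype ι] (w : ι → ℕ) (hw : ∀ i, 0 < w i) (n : ℕ) :
    Finite (WSol w n) := by
  have hb : ∀ (d : WSol w n) i, d.1 i < n + 1 := by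
    intro d i
    have h1 := Finset.single_le_sum (f := fun i => w i * d.1 i) (fun _ _ => Nat.zero_le _)
      (Finset.mem_univ i)
    have h2 := d.2.2
    have h3 := hw i
    nlinarith
  refine Finite.of_injective (β := ι → Fin (n + 1)) (fun d i => ⟨d.1 i, hb d i⟩) ?_
  intro d e h
  apply Subtype.ext
  funext i
  simpa using congrFun h i

theorem WSol.eqp_fin (t : ℕ) : ∀ (w : Fin t → ℕ), (∀ i, 0 < w i) →
    EQP (fun n => (Nat.card (WSol w n) : ℚ)) := by
  induction t with
  | zero =>
    intro w hw
    refine EQP.eventually_zero 1 fun n hn => ?_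
    have : IsEmpty (WSol w n) := ⟨fun d => by have := d.2.2; simp at this; omega⟩
    simp
  | succ t ih =>
    intro w hw
    refine EQP.step (w 0) (hw 0) (ih (Fin.tail w) fun i => hw _) fun n => ?_
    have := WSol.finite w hw n
    have := WSol.finite (Fin.tail w) (fun i => hw _) n
    rw [← Nat.cast_add, ← Nat.card_sum]
    congr 1
    symm
    let F : WSol w n ⊕ WSol (Fin.tail w) n → WSol w (n + w 0) :=
      Sum.elim
        (fun d => ⟨Fin.cons (d.1 0 + 1) (Fin.tail d.1), by
          have := d.2.2
          rw [Fin.sum_univ_succ] at this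
          refine ⟨fun i => ?_, ?_⟩
          · refine Fin.cases ?_ (fun i => ?_) i
            · simp
            · simpa using! d.2.1 _
          · rw [Fin.sum_univ_succ]
            simp only [Fin.cons_zero, Fin.cons_succ, Fin.tail]
            linarith⟩)
        (fun d => ⟨Fin.cons 1 d.1, by
          have := d.2.2
          refine ⟨fun i => ?_, ?_⟩
          · refine Fin.cases ?_ (fun i => ?_) i
            · simp
            · simpa using d.2.1 _
          · rw [Fin.sum_univ_succ]
            simp only [Fin.cons_zero, Fin.cons_succ]
            simp only [Fin.tail] at this
            rw [this]; ring⟩)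
    refine Nat.card_congr (Equiv.ofBijective F ⟨?_, ?_⟩)
    · rintro (d | d) (e | e) h
      · have h' := congrArg Subtype.val h
        simp only [F, Sum.elim_inl] at h'
        obtain ⟨h1, h2⟩ := Fin.cons_inj.1 h'
        congr 1
        apply Subtype.ext
        rw [← Fin.cons_self_tail d.1, ← Fin.cons_self_tail e.1, h2]
        congr 1; omega
      · have h' := congrArg Subtype.val h
        simp only [F, Sum.elim_inl, Sum.elim_inr] at h'
        obtain ⟨h1, h2⟩ := Fin.cons_inj.1 h'
        have := d.2.1 0
        omega
      · have h' := congrArg Subtype.val h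
        simp only [F, Sum.elim_inl, Sum.elim_inr] at h'
        obtain ⟨h1, h2⟩ := Fin.cons_inj.1 h'
        have := e.2.1 0
        omega
      · have h' := congrArg Subtype.val h
        simp only [F, Sum.elim_inr] at h'
        obtain ⟨h1, h2⟩ := Fin.cons_inj.1 h'
        congr 1
        exact Subtype.ext h2
    · intro d
      have hs := d.2.2
      rw [Fin.sum_univ_succ] at hs
      have h0 := d.2.1 0
      by_cases h1 : d.1 0 = 1
      · refine ⟨Sum.inr ⟨Fin.tail d.1, fun i => d.2.1 _, ?_⟩, ?_⟩
        · rw [h1] at hs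
          simp only [Fin.tail]
          omega
        · apply Subtype.ext
          simp only [F, Sum.elim_inr]
          conv_rhs => rw [← Fin.cons_self_tail d.1, h1]
      · refine ⟨Sum.inl ⟨Fin.cons (d.1 0 - 1) (Fin.tail d.1), fun i => ?_, ?_⟩, ?_⟩
        · refine Fin.cases ?_ (fun i => ?_) i
          · simp; omega
          · simpa using! d.2.1 _
        · rw [Fin.sum_univ_succ]
          simp only [Fin.cons_zero, Fin.cons_succ, Fin.tail]
          obtain ⟨x, hx⟩ := Nat.exists_eq_add_of_le (show 1 ≤ d.1 0 from h0)
          rw [hx] at hs ⊢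
          rw [Nat.add_sub_cancel_left]
          have : w 0 * (1 + x) = w 0 + w 0 * x := by ring
          omega
        · apply Subtype.ext
          simp only [F, Sum.elim_inl, Fin.cons_zero, Fin.tail_cons]
          rw [Nat.sub_add_cancel h0, Fin.cons_self_tail]

theorem WSol.eqp {ι : Type} [Fintype ι] (w : ι → ℕ) (hw : ∀ i, 0 < w i) :
    EQP (fun n => (Nat.card (WSol w n) : ℚ)) := by
  let e := Fintype.equivFin ι
  have := WSol.eqp_fin _ (w ∘ e.symm) fun i => hw _
  convert this using 3 with n
  refine Nat.card_congr (Equiv.subtypeEquiv (e.arrowCongr (Equiv.refl ℕ)) fun d => ?_)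
  refine and_congr ?_ ?_
  · rw [← e.symm.forall_congr_right]; simp
  · rw [← e.symm.sum_comp]; simp

theorem fixed_comp_eqp (m : ℕ) (σ : Equiv.Perm (Fin m)) :
    EQP (fun n => (Nat.card {c : Fin m → ℕ // ((∀ i, 0 < c i) ∧ ∑ i, c i = n) ∧
      ∀ i, c (σ i) = c i} : ℚ)) := by
  classical
  let s := Equiv.Perm.SameCycle.setoid σ
  let w : Quotient s → ℕ := fun z => (Finset.univ.filter fun i => Quotient.mk s i = z).card
  have hw : ∀ z, 0 < w z := by
    intro z
    obtain ⟨i, rfl⟩ := Quotient.exists_rep z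
    exact Finset.card_pos.2 ⟨i, by simp⟩
  have hsum : ∀ d : Quotient s → ℕ, ∑ i, d (Quotient.mk s i) = ∑ z, w z * d z := by
    intro d
    rw [← Finset.sum_fiberwise Finset.univ (fun i => Quotient.mk s i)]
    refine Finset.sum_congr rfl fun z _ => ?_
    rw [Finset.sum_congr rfl (g := fun _ => d z)]
    · simp [w]
    · intro i hi
      rw [(Finset.mem_filter.1 hi).2]
  convert WSol.eqp w hw using 3 with n
  symm
  refine Nat.card_congr (Equiv.ofBijective (fun d => ⟨fun i => d.1 (Quotient.mk s i),
    ⟨fun i => d.2.1 _, (hsum _).trans d.2.2⟩, fun i => ?_⟩) ⟨?_, ?_⟩)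
  · refine congrArg d.1 (Quotient.sound ?_)
    change Equiv.Perm.SameCycle σ (σ i) i
    exact Equiv.Perm.sameCycle_apply_left.2 (Equiv.Perm.SameCycle.refl _ _)
  · intro d e h
    apply Subtype.ext
    funext z
    obtain ⟨i, rfl⟩ := Quotient.exists_rep z
    exact congrFun (congrArg Subtype.val h) i
  · rintro ⟨c, ⟨hc, hn⟩, hσ⟩
    have hz : ∀ (i : Fin m) (t : ℤ), c ((σ ^ t) i) = c i := by
      intro i t
      induction t using Int.induction_on with
      | zero => simp
      | succ t ih => rw [add_comm, zpow_add, zpow_one, Equiv.Perm.mul_apply, hσ, ih]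
      | pred t ih =>
        rw [← ih, ← hσ]
        congr 1
        rw [← Equiv.Perm.mul_apply, ← zpow_one_add]
        congr 2; ring
    let d : Quotient s → ℕ := Quotient.lift c (by
      rintro a b ⟨t, rfl⟩
      exact (hz a t).symm)
    refine ⟨⟨d, fun z => ?_, ?_⟩, ?_⟩
    · obtain ⟨i, rfl⟩ := Quotient.exists_rep z
      exact hc i
    · rw [← hsum]; exact hn
    · rfl

@[ext] structure Red (K : Type) [Field K] (S : Finset K) (k m : ℕ) where
  B : Matrix (Fin m) (Fin m) K
  mem : ∀ i j, B i j ∈ S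
  rank_eq : B.rank = k
  red : ∀ i j, (∀ l, B i l = B j l ∧ B l i = B l j) → i = j

@[ext] structure PComp (m n : ℕ) where
  c : Fin m → ℕ
  pos : ∀ i, 0 < c i
  sum_eq : ∑ i, c i = n

instance (K : Type) [Field K] (S : Finset K) (k m : ℕ) : Finite (Red K S k m) := by
  refine Finite.of_injective (β := Fin m → Fin m → S) (fun A i j => ⟨A.B i j, A.mem i j⟩) ?_
  intro A A' h
  ext i j
  simpa using congrFun (congrFun h i) j

instance (m n : ℕ) : Finite (PComp m n) := by
  have hb : ∀ (d : PComp m n) i, d.c i < n + 1 := by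
    intro d i
    have h1 := Finset.single_le_sum (f := fun i => d.c i) (fun _ _ => Nat.zero_le _)
      (Finset.mem_univ i)
    have h2 := d.sum_eq
    omega
  refine Finite.of_injective (β := Fin m → Fin (n + 1)) (fun d i => ⟨d.c i, hb d i⟩) ?_
  intro A A' h
  ext i
  simpa using congrFun h i

instance (K : Type) [Field K] (S : Finset K) (k m : ℕ) :
    MulAction (Equiv.Perm (Fin m)) (Red K S k m) where
  smul σ A :=
    { B := A.B.submatrix σ.symm σ.symm
      mem := fun i j => A.mem _ _
      rank_eq := by rw [Matrix.rank_submatrix, A.rank_eq]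
      red := fun i j h => σ.symm.injective (A.red _ _ fun l => by simpa using h (σ l)) }
  one_smul A := rfl
  mul_smul σ τ A := rfl

instance (m n : ℕ) : MulAction (Equiv.Perm (Fin m)) (PComp m n) where
  smul σ d :=
    { c := d.c ∘ σ.symm
      pos := fun i => d.pos _
      sum_eq := (σ.symm.sum_comp d.c).trans d.sum_eq }
  one_smul A := rfl
  mul_smul σ τ A := rfl

theorem Red.smul_B {K : Type} [Field K] {S : Finset K} {k m : ℕ} (σ : Equiv.Perm (Fin m))
    (A : Red K S k m) : (σ • A).B = A.B.submatrix σ.symm σ.symm := rfl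

theorem PComp.smul_c {m n : ℕ} (σ : Equiv.Perm (Fin m))
    (A : PComp m n) : (σ • A).c = A.c ∘ σ.symm := rfl

theorem fixedBy_eqp (m : ℕ) (σ : Equiv.Perm (Fin m)) :
    EQP (fun n => (Nat.card (MulAction.fixedBy (PComp m n) σ) : ℚ)) := by
  convert fixed_comp_eqp m σ using 3 with n
  refine Nat.card_congr (Equiv.ofBijective (fun d => ⟨d.1.c, ⟨d.1.pos, d.1.sum_eq⟩, fun i => ?_⟩)
    ⟨?_, ?_⟩)
  · have := congrArg PComp.c (MulAction.mem_fixedBy.1 d.2)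
    have := congrFun this (σ i)
    rw [PComp.smul_c] at this
    simpa using this.symm
  · intro d e h
    apply Subtype.ext
    ext i
    exact congrFun (congrArg Subtype.val h) i
  · rintro ⟨c, ⟨h1, h2⟩, h3⟩
    refine ⟨⟨⟨c, h1, h2⟩, ?_⟩, rfl⟩
    rw [MulAction.mem_fixedBy]
    ext i
    rw [PComp.smul_c]
    simpa using (h3 (σ.symm i)).symm

theorem orbits_eqp (K : Type) [Field K] (S : Finset K) (k m : ℕ) :
    EQP (fun n => (Nat.card (Quotient (MulAction.orbitRel (Equiv.Perm (Fin m))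
      (Red K S k m × PComp m n))) : ℚ)) := by
  classical
  have key : ∀ n, (Nat.card (Quotient (MulAction.orbitRel (Equiv.Perm (Fin m))
      (Red K S k m × PComp m n))) : ℚ) = (Nat.card (Equiv.Perm (Fin m)) : ℚ)⁻¹ *
      ∑ σ : Equiv.Perm (Fin m), (Nat.card (MulAction.fixedBy (Red K S k m) σ) : ℚ) *
        (Nat.card (MulAction.fixedBy (PComp m n) σ) : ℚ) := by
    intro n
    have := Fintype.ofFinite (Quotient (MulAction.orbitRel (Equiv.Perm (Fin m))
      (Red K S k m × PComp m n)))
    have := fun σ : Equiv.Perm (Fin m) =>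
      Fintype.ofFinite (MulAction.fixedBy (Red K S k m × PComp m n) σ)
    have h := MulAction.sum_card_fixedBy_eq_card_orbits_mul_card_group (Equiv.Perm (Fin m))
      (Red K S k m × PComp m n)
    simp only [← Nat.card_eq_fintype_card] at h
    have hpos : (Nat.card (Equiv.Perm (Fin m)) : ℚ) ≠ 0 := by
      exact_mod_cast Nat.card_pos.ne'
    rw [eq_inv_mul_iff_mul_eq₀ hpos, mul_comm, ← Nat.cast_mul, ← h, Nat.cast_sum]
    refine Finset.sum_congr rfl fun σ _ => ?_
    rw [← Nat.cast_mul, ← Nat.card_prod]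
    congr 1
    refine Nat.card_congr ((Equiv.subtypeEquivRight ?_).trans
      (Equiv.Set.prod (MulAction.fixedBy (Red K S k m) σ) (MulAction.fixedBy (PComp m n) σ)))
    rintro ⟨a, b⟩
    simp only [MulAction.mem_fixedBy, Set.mem_prod, Prod.smul_mk, Prod.mk.injEq]
  simp only [key]
  exact (EQP.sum _ _ fun σ _ => (fixedBy_eqp m σ).const_mul _).const_mul _

theorem row_code {K : Type} [Field K] (S : Finset K) (k m : ℕ) (A : Matrix (Fin m) (Fin m) K)
    (hS : ∀ i j, A i j ∈ S) (hk : A.rank = k) :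
    ∃ φ : Fin m → (Fin k → S), ∀ i j, φ i = φ j → ∀ l, A i l = A j l := by
  classical
  obtain ⟨b, hb, hspan, hli⟩ := exists_linearIndependent K (Set.range A.col)
  have hfin : b.Finite := (Set.finite_range _).subset hb
  have := hfin.fintype
  have hcard : Fintype.card b = k := by
    have h := finrank_span_set_eq_card (R := K) (s := b) hli
    rw [hspan, ← Matrix.rank_eq_finrank_span_cols, hk] at h
    rw [h, Set.toFinset_card]
  let e : b ≃ Fin k := Fintype.equivFinOfCardEq hcard
  have hmem : ∀ (v : b) i, v.1 i ∈ S := by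
    rintro ⟨v, hv⟩ i
    obtain ⟨j, rfl⟩ := hb hv
    exact hS i j
  refine ⟨fun i t => ⟨(e.symm t).1 i, hmem _ _⟩, fun i j h l => ?_⟩
  have hv : ∀ v ∈ b, v i = v j := by
    intro v hv
    have := congrArg Subtype.val (congrFun h (e ⟨v, hv⟩))
    simpa using this
  let L : (Fin m → K) →ₗ[K] K := (LinearMap.proj (R := K) (φ := fun _ : Fin m => K) i) -
    LinearMap.proj (R := K) (φ := fun _ : Fin m => K) j
  have hle : Submodule.span K b ≤ LinearMap.ker L := by
    rw [Submodule.span_le]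
    intro v hvb
    simp [L, hv v hvb]
  rw [hspan] at hle
  have := hle (Submodule.subset_span ⟨l, rfl⟩)
  simp only [L, LinearMap.mem_ker, LinearMap.sub_apply, LinearMap.proj_apply] at this
  exact sub_eq_zero.1 this

theorem Red.bound {K : Type} [Field K] {S : Finset K} {k m : ℕ} (A : Red K S k m) :
    m ≤ S.card ^ k * S.card ^ k := by
  obtain ⟨φ, hφ⟩ := row_code S k m A.B A.mem A.rank_eq
  obtain ⟨ψ, hψ⟩ := row_code S k m A.B.transpose (fun i j => A.mem j i)
    (by rw [Matrix.rank_transpose, A.rank_eq])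
  have hinj : Function.Injective (fun i => (φ i, ψ i)) := by
    intro i j h
    rw [Prod.mk.injEq] at h
    exact A.red i j fun l => ⟨hφ i j h.1 l, hψ i j h.2 l⟩
  simpa using Fintype.card_le_of_injective _ hinj

theorem PComp.exists_map {m n : ℕ} (d : PComp m n) :
    ∃ f : Fin n → Fin m, ∀ i, Nat.card {x // f x = i} = d.c i := by
  obtain ⟨c, hc, rfl⟩ := d
  refine ⟨fun x => (finSigmaFinEquiv.symm x).1, fun i => ?_⟩
  have e : {x : Fin (∑ i, c i) // (finSigmaFinEquiv.symm x).1 = i} ≃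
      {y : (Σ i, Fin (c i)) // y.1 = i} :=
    Equiv.subtypeEquiv finSigmaFinEquiv.symm fun _ => Iff.rfl
  rw [Nat.card_congr (e.trans (Equiv.sigmaSubtype i))]
  simp

noncomputable def PComp.f {m n : ℕ} (d : PComp m n) : Fin n → Fin m := d.exists_map.choose

theorem PComp.card_f {m n : ℕ} (d : PComp m n) (i : Fin m) :
    Nat.card {x // d.f x = i} = d.c i := d.exists_map.choose_spec i

theorem PComp.surj {m n : ℕ} (d : PComp m n) : Function.Surjective d.f := by
  intro i
  have h := d.card_f i
  have hp := d.pos i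
  rw [← h] at hp
  obtain ⟨x, hx⟩ := (Nat.card_pos_iff.1 hp).1
  exact ⟨x, hx⟩

theorem exists_perm_of_fibers {n : ℕ} {β : Type} (f g : Fin n → β)
    (h : ∀ i, Nat.card {x // f x = i} = Nat.card {x // g x = i}) :
    ∃ π : Equiv.Perm (Fin n), ∀ x, g (π x) = f x := by
  have e : ∀ i, {x // f x = i} ≃ {x // g x = i} := fun i => Classical.choice (Finite.card_eq.1 (h i))
  exact ⟨Equiv.ofFiberEquiv e, fun x => Equiv.ofFiberEquiv_map e x⟩

theorem rank_blow {K : Type} [Field K] {m n : ℕ} (B : Matrix (Fin m) (Fin m) K)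
    (f : Fin n → Fin m) (hf : Function.Surjective f) : (B.submatrix f f).rank = B.rank := by
  apply le_antisymm (Matrix.rank_submatrix_le _ _ _)
  obtain ⟨s, hs⟩ := hf.hasRightInverse
  have : B = (B.submatrix f f).submatrix s s := by
    ext i j; simp [hs i, hs j]
  conv_lhs => rw [this]
  exact Matrix.rank_submatrix_le _ _ _

abbrev MM (K : Type) [Field K] (S : Finset K) (k n : ℕ) : Type :=
  {A : Matrix (Fin n) (Fin n) K // (∀ i j, A i j ∈ S) ∧ A.rank = k}

def RR (K : Type) [Field K] (S : Finset K) (k n : ℕ) (A B : MM K S k n) : Prop :=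
  ∃ π : Equiv.Perm (Fin n), (fun i j => A.1 (π⁻¹ i) (π⁻¹ j)) = B.1

theorem RR.equivalence (K : Type) [Field K] (S : Finset K) (k n : ℕ) :
    Equivalence (RR K S k n) where
  refl A := ⟨1, rfl⟩
  symm := by
    rintro A B ⟨π, h⟩
    refine ⟨π⁻¹, ?_⟩
    rw [← h]; simp
  trans := by
    rintro A B C ⟨π, h⟩ ⟨τ, h'⟩
    refine ⟨τ * π, ?_⟩
    rw [← h', ← h]; simp

noncomputable def toMat {K : Type} [Field K] {S : Finset K} {k m n : ℕ}
    (x : Red K S k m × PComp m n) : MM K S k n :=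
  ⟨x.1.B.submatrix x.2.f x.2.f, fun _ _ => x.1.mem _ _, by
    rw [rank_blow _ _ x.2.surj, x.1.rank_eq]⟩

theorem toMat_smul {K : Type} [Field K] {S : Finset K} {k m n : ℕ}
    (σ : Equiv.Perm (Fin m)) (x : Red K S k m × PComp m n) :
    RR K S k n (toMat (σ • x)) (toMat x) := by
  obtain ⟨π, hπ⟩ := exists_perm_of_fibers (fun y => σ.symm ((σ • x).2.f y)) x.2.f (by
    intro i
    rw [x.2.card_f]
    have := (σ • x).2.card_f (σ i)
    rw [Prod.smul_snd, PComp.smul_c] at this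
    simp only [Function.comp, Equiv.symm_apply_apply] at this
    rw [← this]
    refine Nat.card_congr (Equiv.subtypeEquivRight fun y => ?_)
    rw [Equiv.symm_apply_eq]; rfl)
  refine ⟨π, ?_⟩
  ext i j
  simp only [toMat, Matrix.submatrix_apply]
  have h1 := hπ (π⁻¹ i)
  have h2 := hπ (π⁻¹ j)
  rw [show π (π⁻¹ i) = i from π.apply_symm_apply i] at h1
  rw [show π (π⁻¹ j) = j from π.apply_symm_apply j] at h2
  rw [h1, h2]
  rfl

theorem twin_iff {K : Type} [Field K] {S : Finset K} {k m n : ℕ} (B : Red K S k m)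
    (f : Fin n → Fin m) (hf : Function.Surjective f) (i j : Fin n) :
    f i = f j ↔ ∀ l, B.B (f i) (f l) = B.B (f j) (f l) ∧ B.B (f l) (f i) = B.B (f l) (f j) := by
  constructor
  · intro h l; rw [h]; exact ⟨rfl, rfl⟩
  · intro h
    apply B.red
    intro l
    obtain ⟨l, rfl⟩ := hf l
    exact h l

theorem exists_equiv_of_ker {α β γ : Type} (f : α → β) (g : α → γ) (hf : Function.Surjective f)
    (hg : Function.Surjective g) (h : ∀ i j, f i = f j ↔ g i = g j) :
    ∃ e : β ≃ γ, ∀ i, e (f i) = g i := by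
  obtain ⟨s, hs⟩ := hf.hasRightInverse
  have key : ∀ i, g (s (f i)) = g i := fun i => (h _ _).1 (hs _)
  refine ⟨Equiv.ofBijective (fun b => g (s b)) ⟨?_, ?_⟩, key⟩
  · intro b b' hb
    rw [← hs b, ← hs b']
    exact (h _ _).2 hb
  · intro c
    obtain ⟨i, rfl⟩ := hg c
    exact ⟨f i, key i⟩

theorem toMat_inj {K : Type} [Field K] {S : Finset K} {k m m' n : ℕ}
    (x : Red K S k m × PComp m n) (x' : Red K S k m' × PComp m' n)
    (h : RR K S k n (toMat x) (toMat x')) :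
    ∃ e : Fin m ≃ Fin m', (∀ i j, x'.1.B (e i) (e j) = x.1.B i j) ∧
      ∀ i, x'.2.c (e i) = x.2.c i := by
  obtain ⟨π, hπ⟩ := h
  have hB : ∀ i j, x.1.B (x.2.f (π⁻¹ i)) (x.2.f (π⁻¹ j)) = x'.1.B (x'.2.f i) (x'.2.f j) :=
    fun i j => congrFun (congrFun hπ i) j
  have hg : Function.Surjective (fun i => x.2.f (π⁻¹ i)) :=
    x.2.surj.comp (Equiv.surjective π⁻¹)
  obtain ⟨e, he⟩ := exists_equiv_of_ker (fun i => x.2.f (π⁻¹ i)) x'.2.f hg x'.2.surj (by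
    intro i j
    rw [twin_iff x'.1 _ x'.2.surj, twin_iff x.1 _ hg]
    simp only [hB])
  refine ⟨e, fun i j => ?_, fun i => ?_⟩
  · obtain ⟨i, rfl⟩ := hg i
    obtain ⟨j, rfl⟩ := hg j
    simp only [he, hB]
  · rw [← PComp.card_f, ← PComp.card_f]
    refine Nat.card_congr (Equiv.subtypeEquiv π⁻¹ fun y => ?_)
    rw [← he, e.apply_eq_iff_eq]

theorem toMat_surj {K : Type} [Field K] {S : Finset K} {k n : ℕ} (A : MM K S k n) :
    ∃ (m : ℕ) (x : Red K S k m × PComp m n), RR K S k n (toMat x) A := by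
  classical
  let s : Setoid (Fin n) :=
    { r := fun i j => ∀ l, A.1 i l = A.1 j l ∧ A.1 l i = A.1 l j
      iseqv := ⟨fun i l => ⟨rfl, rfl⟩, fun h l => ⟨(h l).1.symm, (h l).2.symm⟩,
        fun h h' l => ⟨(h l).1.trans (h' l).1, (h l).2.trans (h' l).2⟩⟩ }
  let e := Fintype.equivFin (Quotient s)
  let g : Fin n → Fin (Fintype.card (Quotient s)) := fun i => e (Quotient.mk s i)
  have hg : Function.Surjective g := e.surjective.comp Quotient.mk_surjective
  obtain ⟨t, ht⟩ := hg.hasRightInverse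
  have hgk : ∀ i j, g i = g j → ∀ l, A.1 i l = A.1 j l ∧ A.1 l i = A.1 l j :=
    fun i j h => Quotient.exact (e.injective h)
  have hA : A.1 = (A.1.submatrix t t).submatrix g g := by
    ext i j
    simp only [Matrix.submatrix_apply]
    rw [(hgk _ _ (ht (g i)) _).1, (hgk _ _ (ht (g j)) _).2]
  let B : Red K S k (Fintype.card (Quotient s)) :=
    { B := A.1.submatrix t t
      mem := fun _ _ => A.2.1 _ _
      rank_eq := by rw [← rank_blow _ g hg, ← hA, A.2.2]
      red := by
        intro i j h
        rw [← ht i, ← ht j]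
        refine congrArg e (Quotient.sound fun l => ?_)
        have h1 := h (g l)
        simp only [Matrix.submatrix_apply] at h1
        have h2 := fun x => hgk _ _ (ht (g l)) x
        rw [(h2 _).1, (h2 _).1, (h2 _).2, (h2 _).2] at h1
        exact h1 }
  let d : PComp (Fintype.card (Quotient s)) n :=
    { c := fun i => Nat.card {x // g x = i}
      pos := fun i => by
        obtain ⟨x, hx⟩ := hg i
        have : Nonempty {x // g x = i} := ⟨⟨x, hx⟩⟩
        exact Nat.card_pos
      sum_eq := by
        rw [← Nat.card_sigma, Nat.card_congr (Equiv.sigmaFiberEquiv g)]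
        simp }
  obtain ⟨π, hπ⟩ := exists_perm_of_fibers d.f g fun i => d.card_f i
  refine ⟨_, (B, d), π, ?_⟩
  rw [hA]
  ext i j
  have h1 := hπ (π⁻¹ i)
  have h2 := hπ (π⁻¹ j)
  rw [show π (π⁻¹ i) = i from π.apply_symm_apply i] at h1
  rw [show π (π⁻¹ j) = j from π.apply_symm_apply j] at h2
  simp only [toMat, Matrix.submatrix_apply]
  rw [← h1, ← h2]
  rfl

theorem card_eq (K : Type) [Field K] (S : Finset K) (k n : ℕ) :
    Nat.card (Quot (RR K S k n)) =
      ∑ m ∈ Finset.range (S.card ^ k * S.card ^ k + 1),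
        Nat.card (Quotient (MulAction.orbitRel (Equiv.Perm (Fin m))
          (Red K S k m × PComp m n))) := by
  rw [Finset.sum_range, ← Nat.card_sigma]
  symm
  let F : (Σ m : Fin (S.card ^ k * S.card ^ k + 1), Quotient (MulAction.orbitRel
      (Equiv.Perm (Fin m)) (Red K S k m × PComp m n))) → Quot (RR K S k n) :=
    fun z => Quotient.lift (fun x => Quot.mk (RR K S k n) (toMat x)) (by
      rintro a b ⟨σ, rfl⟩
      exact Quot.sound (toMat_smul σ b)) z.2
  refine Nat.card_congr (Equiv.ofBijective F ⟨?_, ?_⟩)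
  · rintro ⟨⟨m, hm⟩, q⟩ ⟨⟨m', hm'⟩, q'⟩ h
    obtain ⟨x, rfl⟩ := Quotient.exists_rep q
    obtain ⟨x', rfl⟩ := Quotient.exists_rep q'
    have h' : RR K S k n (toMat x) (toMat x') :=
      ((RR.equivalence K S k n).quot_mk_eq_iff _ _).1 h
    obtain ⟨e, he1, he2⟩ := toMat_inj x x' h'
    have hmm : m = m' := by simpa using Fintype.card_congr e
    subst hmm
    congr 1
    symm
    apply Quotient.sound
    refine ⟨e, ?_⟩
    refine Prod.ext ?_ ?_
    · ext i j
      change x.1.B (e.symm i) (e.symm j) = _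
      rw [← he1]; simp
    · ext i
      change x.2.c (e.symm i) = _
      rw [← he2]; simp
  · intro q
    obtain ⟨A, rfl⟩ := Quot.exists_rep q
    obtain ⟨m, x, hx⟩ := toMat_surj A
    exact ⟨⟨⟨m, Nat.lt_succ_of_le x.1.bound⟩, Quotient.mk _ x⟩, Quot.sound hx⟩

/-- For a finite subset `S` of a field `K` and `k ∈ ℕ`, the number of orbits of `Sym([n])`,
acting by simultaneous row and column permutations, on the set of `n × n` matrices with
entries in `S` and rank exactly `k`, is a quasipolynomial in `n` for `n ≫ 0`. -/
theorem orbit_count_fixed_rank_matrices_with_prescribed_entries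
    (K : Type) [Field K] (S : Finset K) (k : ℕ) :
    QuasiPolynomialCount (fun n =>
      Nat.card (Quot (fun (A B : {A : Matrix (Fin n) (Fin n) K //
          (∀ i j, A i j ∈ S) ∧ A.rank = k}) =>
        ∃ π : Equiv.Perm (Fin n),
          (fun i j => A.1 (π⁻¹ i) (π⁻¹ j)) = B.1))) := by
  apply EQP.toQuasi
  have h : EQP (fun n => ∑ m ∈ Finset.range (S.card ^ k * S.card ^ k + 1),
      (Nat.card (Quotient (MulAction.orbitRel (Equiv.Perm (Fin m))
        (Red K S k m × PComp m n))) : ℚ)) := EQP.sum _ _ fun m _ => orbits_eqp K S k m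
  simp only [← Nat.cast_sum, ← card_eq] at h
  exact h
end
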